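/- Let k ≥ 2 divide n, set k_X = ⌊k/2⌋ and k_Y = ⌈k/2⌉, and let H be a k-uniform hypergraph on [n] with m edges and density p = m/binom(n,k) that satisfies properties R_a, R_b, R_c, R_d, R_e, R_f with parameter ε = ε(n), where ε → 0 and ε n^{1/2} p² / log^5 n → ∞. Then H contains a collection of at least (1 − 4ε^{1/3}) m/ν_k pairwise edge-disjoint perfect matchings, where ν_k = n/k. -/

import Mathlib

open Finset Filter

/-- `C` is a perfect matching of the hypergraph `H` on `Fin n` (where `k ∣ n`):
a set of `n/k` pairwise disjoint edges of `H` covering all vertices. -/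
def IsHypPerfectMatching (n k : ℕ) (H C : Finset (Finset (Fin n))) : Prop :=
  C ⊆ H ∧ C.card = n / k ∧ (C : Set (Finset (Fin n))).PairwiseDisjoint id ∧
    C.biUnion id = Finset.univ

open scoped Classical in
/-- The neighbourhood `N_H(S)` of `S` in a `k`-uniform hypergraph `H` on `Fin n`:
the `(k - |S|)`-sets `Y` with `S ∪ Y ∈ H`. -/
def hNbhd (n k : ℕ) (H : Finset (Finset (Fin n))) (S : Finset (Fin n)) :
    Finset (Finset (Fin n)) :=
  Finset.univ.filter fun Y => Y.card = k - S.card ∧ S ∪ Y ∈ H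

/-- The degree `d_H(S) = |N_H(S)|`. -/
def hDeg (n k : ℕ) (H : Finset (Finset (Fin n))) (S : Finset (Fin n)) : ℕ :=
  (hNbhd n k H S).card

namespace PM

/-- edges of `G` between `S` and `T` -/
def eb {ν : ℕ} (G : Finset (Fin ν × Fin ν)) (S T : Finset (Fin ν)) : ℕ :=
  (G.filter fun x => x.1 ∈ S ∧ x.2 ∈ T).card

lemma eb_submod {ν : ℕ} (G : Finset (Fin ν × Fin ν)) (S T S' T' : Finset (Fin ν)) :
    eb G (S ∪ S') (T ∩ T') + eb G (S ∩ S') (T ∪ T') ≤ eb G S T + eb G S' T' := by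
  unfold eb
  simp only [Finset.card_filter]
  rw [← Finset.sum_add_distrib, ← Finset.sum_add_distrib]
  refine Finset.sum_le_sum fun x _ => ?_
  by_cases h1 : x.1 ∈ S <;> by_cases h2 : x.1 ∈ S' <;> by_cases h3 : x.2 ∈ T <;>
    by_cases h4 : x.2 ∈ T' <;> simp [h1, h2, h3, h4]

lemma eb_erase {ν : ℕ} (G : Finset (Fin ν × Fin ν)) (x : Fin ν × Fin ν) (hx : x ∈ G)
    (S T : Finset (Fin ν)) :
    eb G S T = eb (G.erase x) S T + if x.1 ∈ S ∧ x.2 ∈ T then 1 else 0 := by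
  unfold eb
  simp only [Finset.card_filter]
  rw [← Finset.sum_erase_add _ _ hx]

lemma eb_erase_left {ν : ℕ} (G : Finset (Fin ν × Fin ν)) (a : Fin ν)
    (S T : Finset (Fin ν)) (ha : a ∈ S) :
    eb G S T = eb G (S.erase a) T + eb G {a} T := by
  unfold eb
  simp only [Finset.card_filter]
  rw [← Finset.sum_add_distrib]
  refine Finset.sum_congr rfl fun x _ => ?_
  by_cases h1 : x.1 = a
  · simp [h1, ha]
  · simp [h1]

lemma eb_univ_left_sum {ν : ℕ} (G : Finset (Fin ν × Fin ν)) (T : Finset (Fin ν)) :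
    ∀ S : Finset (Fin ν), eb G S T = ∑ a ∈ S, eb G {a} T := by
  intro S
  unfold eb
  simp only [Finset.card_filter]
  rw [Finset.sum_comm]
  refine Finset.sum_congr rfl fun x _ => ?_
  by_cases h : x.2 ∈ T <;> simp [h]

lemma eb_univ_right_sum {ν : ℕ} (G : Finset (Fin ν × Fin ν)) (S : Finset (Fin ν)) :
    ∀ T : Finset (Fin ν), eb G S T = ∑ b ∈ T, eb G S {b} := by
  intro T
  unfold eb
  simp only [Finset.card_filter]
  rw [Finset.sum_comm]
  refine Finset.sum_congr rfl fun x _ => ?_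
  by_cases h : x.1 ∈ S <;> simp [h]

lemma eb_mono_right {ν : ℕ} (G : Finset (Fin ν × Fin ν)) (S T T' : Finset (Fin ν)) (h : T ⊆ T') :
    eb G S T ≤ eb G S T' := by
  unfold eb
  refine Finset.card_le_card fun x => ?_
  simp only [Finset.mem_filter]
  exact fun hx => ⟨hx.1, hx.2.1, h hx.2.2⟩

def CutOK {ν : ℕ} (r : ℕ) (G : Finset (Fin ν × Fin ν)) : Prop :=
  ∀ S T : Finset (Fin ν), (r : ℤ) * ((S.card : ℤ) + T.card - ν) ≤ eb G S T

lemma exists_factor {ν : ℕ} (r : ℕ) (G : Finset (Fin ν × Fin ν)) (hG : CutOK r G) :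
    ∃ F ⊆ G, (∀ a, eb F {a} univ = r) ∧ ∀ b, eb F univ {b} = r := by
  classical
  obtain ⟨F, hFG, hF⟩ := exists_minimal_le_of_wellFoundedLT (fun F => CutOK r F) G hG
  refine ⟨F, hFG, ?_⟩
  have hcut : CutOK r F := hF.prop
  have hlow : ∀ a, r ≤ eb F {a} univ := by
    intro a
    have := hcut {a} univ
    simp only [card_singleton, card_univ, Fintype.card_fin] at this
    push_cast at this
    have h2 : (r : ℤ) ≤ eb F {a} univ := by linarith [this, show (r:ℤ) * (1 + ν - ν) = r by ring]
    exact_mod_cast h2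
  have hlow' : ∀ b, r ≤ eb F univ {b} := by
    intro a
    have := hcut univ {a}
    simp only [card_singleton, card_univ, Fintype.card_fin] at this
    push_cast at this
    have h2 : (r : ℤ) ≤ eb F univ {a} := by linarith [this, show (r:ℤ) * (ν + 1 - ν) = r by ring]
    exact_mod_cast h2
  have htight : ∀ x ∈ F, ∃ S T : Finset (Fin ν), x.1 ∈ S ∧ x.2 ∈ T ∧
      (eb F S T : ℤ) ≤ (r : ℤ) * ((S.card : ℤ) + T.card - ν) := by
    intro x hx
    by_contra hcon
    push Not at hcon
    have : CutOK r (F.erase x) := by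
      intro S T
      have h1 := eb_erase F x hx S T
      by_cases hST : x.1 ∈ S ∧ x.2 ∈ T
      · have h2 := hcon S T hST.1 hST.2
        rw [if_pos hST] at h1
        have h3 : (eb F S T : ℤ) = eb (F.erase x) S T + 1 := by exact_mod_cast h1
        linarith
      · rw [if_neg hST] at h1
        have := hcut S T
        rw [h1] at this
        simpa using this
    have h4 := hF.le_of_le this (Finset.erase_subset x F)
    exact (Finset.notMem_erase x F) (h4 hx)
  have hA : ∀ a, eb F {a} univ = r := by
    intro a
    by_contra hne
    have hgt : r < eb F {a} univ := lt_of_le_of_ne (hlow a) (Ne.symm hne)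
    -- combine tight sets
    have key : ∀ N : Finset (Fin ν), N.Nonempty → (∀ b ∈ N, (a, b) ∈ F) →
        ∃ S T : Finset (Fin ν), a ∈ S ∧ N ⊆ T ∧
          (eb F S T : ℤ) ≤ (r : ℤ) * ((S.card : ℤ) + T.card - ν) := by
      intro N hN
      induction hN using Finset.Nonempty.cons_induction with
      | singleton b =>
        intro h
        obtain ⟨S, T, h1, h2, h3⟩ := htight (a, b) (h b (by simp))
        exact ⟨S, T, h1, by simpa using h2, h3⟩
      | cons b N hb hN ih =>
        intro h
        obtain ⟨S, T, h1, h2, h3⟩ := htight (a, b) (h b (by simp))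
        obtain ⟨S', T', h1', h2', h3'⟩ := ih (fun b' hb' => h b' (by simp [hb']))
        refine ⟨S ∩ S', T ∪ T', by simp [h1', h1] , ?_, ?_⟩
        · intro z hz
          simp only [Finset.mem_cons] at hz
          rcases hz with rfl | hz
          · exact Finset.mem_union_left _ h2
          · exact Finset.mem_union_right _ (h2' hz)
        · have hs := eb_submod F S T S' T'
          have hs' : (eb F (S ∪ S') (T ∩ T') : ℤ) + eb F (S ∩ S') (T ∪ T')
            ≤ eb F S T + eb F S' T' := by exact_mod_cast hs
          have hc := hcut (S ∪ S') (T ∩ T')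
          have e1 : ((S ∪ S').card : ℤ) + (S ∩ S').card = S.card + S'.card := by
            exact_mod_cast Finset.card_union_add_card_inter S S'
          have e2 : ((T ∪ T').card : ℤ) + (T ∩ T').card = T.card + T'.card := by
            exact_mod_cast Finset.card_union_add_card_inter T T'
          have e3 : (r : ℤ) * (((S ∪ S').card : ℤ) + (T ∩ T').card - ν)
            + (r : ℤ) * (((S ∩ S').card : ℤ) + (T ∪ T').card - ν)
            = (r : ℤ) * ((S.card : ℤ) + T.card - ν) + (r : ℤ) * ((S'.card : ℤ) + T'.card - ν) := by
            rw [← mul_add, ← mul_add]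
            congr 1
            linarith
          linarith
    let N : Finset (Fin ν) := univ.filter fun b => (a, b) ∈ F
    have hN : N.Nonempty := by
      have : 0 < eb F {a} univ := by omega
      unfold eb at this
      rw [Finset.card_pos] at this
      obtain ⟨x, hx⟩ := this
      simp only [Finset.mem_filter, mem_singleton, mem_univ, and_true] at hx
      refine ⟨x.2, ?_⟩
      simp only [N, mem_filter, mem_univ, true_and]
      rw [← hx.2]; exact hx.1
    obtain ⟨S, T, h1, h2, h3⟩ := key N hN (fun b hb => by simpa [N] using hb)
    have h4 := eb_erase_left F a S T h1
    have h5 : eb F {a} T = eb F {a} univ := by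
      unfold eb
      congr 1
      ext x
      simp only [mem_filter, mem_singleton, mem_univ, and_true]
      constructor
      · rintro ⟨hx, hx1, hx2⟩; exact ⟨hx, hx1⟩
      · rintro ⟨hx, hx1⟩
        refine ⟨hx, hx1, h2 ?_⟩
        simp only [N, mem_filter, mem_univ, true_and]
        rw [← hx1]; exact hx
    have h6 := hcut (S.erase a) T
    have h7 : (((S.erase a).card : ℤ)) = S.card - 1 := by
      rw [Finset.card_erase_of_mem h1]
      have : 0 < S.card := Finset.card_pos.mpr ⟨a, h1⟩
      omega
    rw [h7] at h6
    rw [h5] at h4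
    have h8 : (eb F S T : ℤ) = eb F (S.erase a) T + eb F {a} univ := by exact_mod_cast h4
    have h9 : (r : ℤ) < eb F {a} univ := by exact_mod_cast hgt
    have h10 : (r : ℤ) * ((S.card : ℤ) - 1 + T.card - ν) = (r : ℤ) * ((S.card : ℤ) + T.card - ν) - r := by
      ring
    linarith
  refine ⟨hA, ?_⟩
  have hsum : ∑ b, eb F univ {b} = ∑ _b : Fin ν, r := by
    rw [← eb_univ_right_sum, eb_univ_left_sum]
    exact Finset.sum_congr rfl fun a _ => hA a
  have := (Finset.sum_eq_sum_iff_of_le (fun b _ => hlow' b)).mp hsum.symm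
  intro b
  exact (this b (mem_univ b)).symm

lemma exists_perms {ν : ℕ} (r : ℕ) : ∀ (F : Finset (Fin ν × Fin ν)),
    (∀ a, eb F {a} univ = r) → (∀ b, eb F univ {b} = r) →
    ∃ π : Fin r → Equiv.Perm (Fin ν), (∀ i a, (a, π i a) ∈ F) ∧
      ∀ i i', i ≠ i' → ∀ a, π i a ≠ π i' a := by
  classical
  induction r with
  | zero => intro F _ _; exact ⟨fun i => i.elim0, fun i => i.elim0, fun i => i.elim0⟩
  | succ r ih =>
    intro F hA hB
    have hall : ∀ S : Finset (Fin ν), S.card ≤ (S.biUnion fun a => univ.filter fun b => (a, b) ∈ F).card := by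
      intro S
      set T := S.biUnion fun a => univ.filter fun b => (a, b) ∈ F with hT
      have h1 : eb F S univ = (r + 1) * S.card := by
        rw [eb_univ_left_sum, Finset.sum_congr rfl fun a _ => hA a]; simp [mul_comm]
      have h2 : eb F univ T = (r + 1) * T.card := by
        rw [eb_univ_right_sum, Finset.sum_congr rfl fun a _ => hB a]; simp [mul_comm]
      have h3 : eb F S univ ≤ eb F univ T := by
        unfold eb
        refine Finset.card_le_card fun x => ?_
        simp only [mem_filter, mem_univ, and_true, true_and]
        rintro ⟨hx, hxS⟩
        refine ⟨hx, ?_⟩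
        rw [hT, mem_biUnion]
        exact ⟨x.1, hxS, by simpa using hx⟩
      rw [h1, h2] at h3
      exact Nat.le_of_mul_le_mul_left h3 (Nat.succ_pos r)
    obtain ⟨f, hf, hfF⟩ := (Finset.all_card_le_biUnion_card_iff_exists_injective _).mp hall
    have hfF' : ∀ a, (a, f a) ∈ F := fun a => by simpa using hfF a
    let π₀ : Equiv.Perm (Fin ν) := Equiv.ofBijective f (Finite.injective_iff_bijective.mp hf)
    let F' := F.filter fun x => x.2 ≠ f x.1
    have hA' : ∀ a, eb F' {a} univ = r := by
      intro a
      have h1 : eb F {a} univ = eb F' {a} univ + 1 := by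
        unfold eb
        have : (F.filter fun x => x.1 ∈ ({a} : Finset (Fin ν)) ∧ x.2 ∈ (univ : Finset (Fin ν)))
          = insert (a, f a) (F'.filter fun x => x.1 ∈ ({a} : Finset (Fin ν)) ∧ x.2 ∈ (univ : Finset (Fin ν))) := by
          ext ⟨x, y⟩
          simp only [F', mem_filter, mem_singleton, mem_univ, and_true, mem_insert, Prod.mk.injEq]
          constructor
          · rintro ⟨h, rfl⟩
            by_cases hy : y = f x
            · left; exact ⟨rfl, hy⟩
            · right; exact ⟨⟨h, hy⟩, rfl⟩
          · rintro (⟨rfl, rfl⟩ | h)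
            · exact ⟨hfF' _, rfl⟩
            · exact ⟨h.1.1, h.2⟩
        rw [this, Finset.card_insert_of_notMem]
        simp [F']
      have := hA a; omega
    have hB' : ∀ b, eb F' univ {b} = r := by
      intro b
      have h1 : eb F univ {b} = eb F' univ {b} + 1 := by
        unfold eb
        have : (F.filter fun x => x.1 ∈ (univ : Finset (Fin ν)) ∧ x.2 ∈ ({b} : Finset (Fin ν)))
          = insert (π₀.symm b, b) (F'.filter fun x => x.1 ∈ (univ : Finset (Fin ν)) ∧ x.2 ∈ ({b} : Finset (Fin ν))) := by
          ext ⟨x, y⟩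
          simp only [F', mem_filter, mem_singleton, mem_univ, true_and, mem_insert, Prod.mk.injEq]
          constructor
          · rintro ⟨h, rfl⟩
            by_cases hy : y = f x
            · left; exact ⟨by rw [Equiv.eq_symm_apply]; exact hy.symm, rfl⟩
            · right; exact ⟨⟨h, hy⟩, rfl⟩
          · rintro (⟨rfl, rfl⟩ | h)
            · refine ⟨?_, rfl⟩
              have := hfF' (π₀.symm y)
              have h2 : f (π₀.symm y) = y := π₀.apply_symm_apply y
              rwa [h2] at this
            · exact ⟨h.1.1, h.2⟩
        rw [this, Finset.card_insert_of_notMem]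
        simp only [F', mem_filter, not_and, mem_univ, true_and]
        intro h
        exact absurd (π₀.apply_symm_apply b).symm h.2
      have := hB b; omega
    obtain ⟨π, h1, h2⟩ := ih F' hA' hB'
    have h1' : ∀ i a, (a, π i a) ∈ F ∧ π i a ≠ f a := fun i a => by
      have := h1 i a; simpa [F'] using this
    refine ⟨Fin.cons π₀ π, ?_, ?_⟩
    · intro i
      refine Fin.cases ?_ (fun i => ?_) i
      · intro a; exact hfF' a
      · intro a; simpa using (h1' i a).1
    · intro i i'
      refine Fin.cases ?_ (fun i => ?_) i
      · refine Fin.cases ?_ (fun i' => ?_) i'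
        · intro h; exact absurd rfl h
        · intro _ a; exact (h1' i' a).2.symm
      · refine Fin.cases ?_ (fun i' => ?_) i'
        · intro _ a; exact (h1' i a).2
        · intro h a
          simpa using h2 i i' (fun hh => h (by rw [hh])) a

lemma cut_perms {ν : ℕ} (r : ℕ) (G : Finset (Fin ν × Fin ν)) (hG : CutOK r G) :
    ∃ π : Fin r → Equiv.Perm (Fin ν), (∀ i a, (a, π i a) ∈ G) ∧
      ∀ i i', i ≠ i' → ∀ a, π i a ≠ π i' a := by
  obtain ⟨F, hFG, hA, hB⟩ := exists_factor r G hG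
  obtain ⟨π, h1, h2⟩ := exists_perms r F hA hB
  exact ⟨π, fun i a => hFG (h1 i a), h2⟩

end PM

namespace PM

lemma mgf_prod {ι α : Type*} [Fintype ι] [DecidableEq ι] [Fintype α] [DecidableEq α]
    (A : ι → Finset α) (c : ℝ) :
    ∑ f : ι → α, Real.exp (c * ((univ.filter fun i => f i ∈ A i).card : ℝ))
      = ∏ i, ((Fintype.card α : ℝ) + (A i).card * (Real.exp c - 1)) := by
  have h1 : ∀ f : ι → α, Real.exp (c * ((univ.filter fun i => f i ∈ A i).card : ℝ))
      = ∏ i, (if f i ∈ A i then Real.exp c else 1) := by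
    intro f
    rw [Finset.prod_ite]
    simp only [prod_const, one_pow, mul_one]
    rw [← Real.exp_nat_mul, mul_comm]
  simp_rw [h1]
  rw [← Fintype.piFinset_univ, ← Finset.prod_univ_sum (fun _ : ι => (univ : Finset α))
    (fun i a => if a ∈ A i then Real.exp c else 1)]
  refine Finset.prod_congr rfl fun i _ => ?_
  have : ∀ a, (if a ∈ A i then Real.exp c else 1) = 1 + if a ∈ A i then (Real.exp c - 1) else 0 := by
    intro a; split_ifs <;> ring
  simp_rw [this]
  rw [Finset.sum_add_distrib]
  simp [Finset.sum_ite_mem]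
  ring

/-- exponential bound -/
lemma mgf_le {ι α : Type*} [Fintype ι] [DecidableEq ι] [Fintype α] [DecidableEq α]
    [Nonempty α] (A : ι → Finset α) (c : ℝ) :
    ∑ f : ι → α, Real.exp (c * ((univ.filter fun i => f i ∈ A i).card : ℝ))
      ≤ (Fintype.card α : ℝ) ^ (Fintype.card ι) *
        Real.exp ((∑ i, ((A i).card : ℝ)) / Fintype.card α * (Real.exp c - 1)) := by
  have hpos : (0:ℝ) < Fintype.card α := by exact_mod_cast Fintype.card_pos
  rw [mgf_prod, Finset.sum_div, Finset.sum_mul, Real.exp_sum]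
  have : (Fintype.card α : ℝ) ^ (Fintype.card ι) = ∏ _i : ι, (Fintype.card α : ℝ) := by simp
  rw [this, ← Finset.prod_mul_distrib]
  refine Finset.prod_le_prod (fun i _ => ?_) (fun i _ => ?_)
  · have h1 : ((A i).card : ℝ) ≤ Fintype.card α := by exact_mod_cast Finset.card_le_univ _
    have h2 := Real.exp_pos c
    have h3 : (0:ℝ) ≤ (A i).card := by positivity
    nlinarith
  · have h := Real.add_one_le_exp (((A i).card : ℝ) / Fintype.card α * (Real.exp c - 1))
    calc _ = (Fintype.card α : ℝ) * (((A i).card : ℝ) / Fintype.card α * (Real.exp c - 1) + 1) := by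
          field_simp; ring
      _ ≤ _ := mul_le_mul_of_nonneg_left h hpos.le

lemma exp_quad {x : ℝ} (h1 : 0 ≤ x) (h2 : x ≤ 1) : Real.exp x - 1 ≤ x + x ^ 2 := by
  have := Real.abs_exp_sub_one_sub_id_le (x := x) (by rw [abs_of_nonneg h1]; exact h2)
  have := (abs_le.mp this).2
  linarith

lemma exp_neg_quad {x : ℝ} (h1 : 0 ≤ x) (h2 : x ≤ 1) : Real.exp (-x) - 1 ≤ -x + x ^ 2 := by
  have := Real.abs_exp_sub_one_sub_id_le (x := -x) (by rw [abs_neg, abs_of_nonneg h1]; exact h2)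
  have := (abs_le.mp this).2
  nlinarith

/-- Markov for counting -/
lemma card_markov {Ω : Type*} [Fintype Ω] (P : Ω → Prop) [DecidablePred P] (g : Ω → ℝ) (t : ℝ)
    (h : ∀ w, P w → t ≤ g w) :
    ((univ.filter P).card : ℝ) ≤ Real.exp (-t) * ∑ w, Real.exp (g w) := by
  rw [Finset.mul_sum]
  calc ((univ.filter P).card : ℝ) = ∑ w ∈ univ.filter P, (1:ℝ) := by simp
    _ ≤ ∑ w ∈ univ.filter P, Real.exp (-t) * Real.exp (g w) := by
        refine Finset.sum_le_sum fun w hw => ?_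
        rw [← Real.exp_add]
        have := h w (Finset.mem_filter.mp hw).2
        exact Real.one_le_exp (by linarith)
    _ ≤ _ := Finset.sum_le_sum_of_subset_of_nonneg (Finset.filter_subset _ _)
        (fun _ _ _ => by positivity)

lemma chernoff_upper {ι α : Type*} [Fintype ι] [DecidableEq ι] [Fintype α] [DecidableEq α]
    [Nonempty α] (A : ι → Finset α) (M η : ℝ) (h0 : 0 ≤ η) (h1 : η ≤ 1) (hM : 0 ≤ M)
    (hμ : (∑ i, ((A i).card : ℝ)) / Fintype.card α ≤ (1 - η) * M)
    (P : (ι → α) → Prop) [DecidablePred P]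
    (hP : ∀ f, P f → M ≤ ((univ.filter fun i => f i ∈ A i).card : ℝ)) :
    ((univ.filter P).card : ℝ)
      ≤ (Fintype.card α : ℝ) ^ (Fintype.card ι) * Real.exp (-(η ^ 2 * M / 4)) := by
  refine (card_markov P (fun f => (η / 2) * ((univ.filter fun i => f i ∈ A i).card : ℝ)) (η / 2 * M)
    (fun f hf => mul_le_mul_of_nonneg_left (hP f hf) (by linarith))).trans ?_
  refine (mul_le_mul_of_nonneg_left (mgf_le A (η / 2)) (Real.exp_pos _).le).trans ?_
  rw [mul_left_comm, ← Real.exp_add]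
  refine mul_le_mul_of_nonneg_left (Real.exp_le_exp.mpr ?_) (by positivity)
  have h2 := exp_quad (x := η / 2) (by linarith) (by linarith)
  have h3 : 0 ≤ Real.exp (η / 2) - 1 := by
    have := Real.add_one_le_exp (η / 2); linarith
  have h4 : (∑ i, ((A i).card : ℝ)) / Fintype.card α * (Real.exp (η / 2) - 1)
    ≤ (1 - η) * M * (η / 2 + (η / 2) ^ 2) := by
    refine mul_le_mul hμ h2 h3 ?_
    exact mul_nonneg (by linarith) hM
  have h5 : 0 ≤ M * η ^ 3 := by positivity
  nlinarith

lemma chernoff_lower {ι α : Type*} [Fintype ι] [DecidableEq ι] [Fintype α] [DecidableEq α]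
    [Nonempty α] (A : ι → Finset α) (η μ : ℝ) (h0 : 0 ≤ η) (h1 : η ≤ 1) 
    (hμ : (∑ i, ((A i).card : ℝ)) / Fintype.card α = μ)
    (P : (ι → α) → Prop) [DecidablePred P]
    (hP : ∀ f, P f → ((univ.filter fun i => f i ∈ A i).card : ℝ) ≤ (1 - η) * μ) :
    ((univ.filter P).card : ℝ)
      ≤ (Fintype.card α : ℝ) ^ (Fintype.card ι) * Real.exp (-(η ^ 2 * μ / 4)) := by
  have hμ0 : 0 ≤ μ := by rw [← hμ]; positivity
  refine (card_markov P (fun f => (-(η / 2)) * ((univ.filter fun i => f i ∈ A i).card : ℝ))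
    (-(η / 2) * ((1 - η) * μ))
    (fun f hf => mul_le_mul_of_nonpos_left (hP f hf) (by linarith))).trans ?_
  refine (mul_le_mul_of_nonneg_left (mgf_le A (-(η / 2))) (Real.exp_pos _).le).trans ?_
  rw [mul_left_comm, ← Real.exp_add, hμ]
  refine mul_le_mul_of_nonneg_left (Real.exp_le_exp.mpr ?_) (by positivity)
  have h2 := exp_neg_quad (x := η / 2) (by linarith) (by linarith)
  have h4 : μ * (Real.exp (-(η / 2)) - 1) ≤ μ * (-(η / 2) + (η / 2) ^ 2) := 
    mul_le_mul_of_nonneg_left h2 hμ0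
  nlinarith

/-- Azuma on permutations -/
lemma azuma_step {m : ℕ} (hm : 0 < m) (x : Fin m → ℝ) (c : ℝ) (hc : ∀ i j, |x i - x j| ≤ c) :
    ∑ i, Real.exp (x i) ≤ m * Real.exp ((∑ i, x i) / m + c ^ 2 / 2) := by
  have hm' : (0:ℝ) < m := by exact_mod_cast hm
  have i0 : Fin m := ⟨0, hm⟩
  have hc0 : 0 ≤ c := (abs_nonneg _).trans (hc i0 i0)
  set μ := (∑ i, x i) / m with hμ
  have hsum : ∑ i, (x i - μ) = 0 := by
    rw [Finset.sum_sub_distrib]; simp [hμ]; field_simp; ring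
  have hdev : ∀ i, |x i - μ| ≤ c := by
    intro i
    have : x i - μ = (∑ j, (x i - x j)) / m := by
      rw [Finset.sum_sub_distrib, hμ]; simp; field_simp
    rw [this, abs_div, abs_of_pos hm', div_le_iff₀ hm']
    refine (Finset.abs_sum_le_sum_abs _ _).trans ?_
    refine (Finset.sum_le_sum fun j _ => hc i j).trans ?_
    simp [mul_comm]
  rcases hc0.eq_or_lt with h | hcpos
  · have : ∀ i, x i = μ := by
      intro i
      have := hdev i
      rw [← h] at this
      have := abs_nonpos_iff.mp this
      linarith
    simp [this, ← h]
  have hpt : ∀ i, Real.exp (x i - μ) ≤ Real.cosh c + (x i - μ) * (Real.sinh c / c) := by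
    intro i
    set y := x i - μ
    have hy := abs_le.mp (hdev i)
    have hce := convexOn_exp.2
    have hconv := hce (Set.mem_univ (-c)) (Set.mem_univ c)
      (a := (c - y) / (2 * c)) (b := (c + y) / (2 * c))
      (div_nonneg (by linarith [hy.2]) (by linarith)) (div_nonneg (by linarith [hy.1]) (by linarith))
      (by field_simp; ring)
    simp only [smul_eq_mul] at hconv
    have e1 : (c - y) / (2 * c) * -c + (c + y) / (2 * c) * c = y := by field_simp; ring
    rw [e1] at hconv
    refine hconv.trans (le_of_eq ?_)
    rw [Real.cosh_eq, Real.sinh_eq]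
    field_simp
    ring
  have h1 : ∑ i, Real.exp (x i - μ) ≤ m * Real.exp (c ^ 2 / 2) := by
    calc _ ≤ ∑ i, (Real.cosh c + (x i - μ) * (Real.sinh c / c)) := Finset.sum_le_sum fun i _ => hpt i
      _ = m * Real.cosh c := by
        rw [Finset.sum_add_distrib, ← Finset.sum_mul, hsum]; simp
      _ ≤ _ := mul_le_mul_of_nonneg_left (Real.cosh_le_exp_half_sq c) hm'.le
  have h2 : ∀ i, Real.exp (x i) = Real.exp μ * Real.exp (x i - μ) := by
    intro i; rw [← Real.exp_add]; congr 1; ring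
  simp_rw [h2]
  rw [← Finset.mul_sum, Real.exp_add, mul_left_comm]
  exact mul_le_mul_of_nonneg_left h1 (Real.exp_pos _).le

lemma azuma (n : ℕ) : ∀ (f : Equiv.Perm (Fin n) → ℝ) (c : ℝ),
    (∀ σ x y, |f (σ * Equiv.swap x y) - f σ| ≤ c) →
    ∑ σ, Real.exp (f σ) ≤ (n.factorial : ℝ) *
      Real.exp ((∑ σ, f σ) / (n.factorial : ℝ) + n * (2 * c ^ 2)) := by
  induction n with
  | zero =>
    intro f c _
    simp
  | succ n ih =>
    intro f c hf
    have hc0 : 0 ≤ c := (abs_nonneg _).trans (hf 1 0 0)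
    let D := (Equiv.Perm.decomposeFin (n := n)).symm
    have hsplit : ∀ g : Equiv.Perm (Fin (n+1)) → ℝ, ∑ σ, g σ = ∑ p, ∑ e, g (D (p, e)) := by
      intro g
      rw [← Fintype.sum_prod_type', ← Equiv.sum_comp D]
    have hD : ∀ p e x y, D (p, e * Equiv.swap x y) = D (p, e) * Equiv.swap x.succ y.succ := by
      intro p e x y
      ext z
      refine Fin.cases ?_ (fun z => ?_) z
      · have : Equiv.swap x.succ y.succ 0 = 0 :=
          Equiv.swap_apply_of_ne_of_ne (Fin.succ_ne_zero _).symm (Fin.succ_ne_zero _).symm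
        simp [D, this]
      · have : Equiv.swap x.succ y.succ z.succ = (Equiv.swap x y z).succ := by
          rw [Equiv.swap_apply_def, Equiv.swap_apply_def]
          simp only [Fin.succ_inj]
          split_ifs <;> rfl
        simp [D, this]
    have hDpq : ∀ p q e, D (q, e) = Equiv.swap 0 q * Equiv.swap 0 p * D (p, e) := by
      intro p q e
      ext z
      refine Fin.cases ?_ (fun z => ?_) z
      · simp [D]
      · simp [D]
    let m : Fin (n+1) → ℝ := fun p => (∑ e, f (D (p, e))) / (n.factorial : ℝ)
    have hfac : (0:ℝ) < n.factorial := by exact_mod_cast n.factorial_pos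
    have h1 : ∀ p, ∑ e, Real.exp (f (D (p, e))) ≤ (n.factorial : ℝ) *
        Real.exp (m p + n * (2 * c ^ 2)) := by
      intro p
      refine ih (fun e => f (D (p, e))) c ?_
      intro σ x y
      simp only [hD]
      exact hf _ _ _
    have h2 : ∀ p q, |m p - m q| ≤ 2 * c := by
      intro p q
      simp only [m]
      rw [← sub_div, ← Finset.sum_sub_distrib, abs_div, abs_of_pos hfac, div_le_iff₀ hfac]
      refine (Finset.abs_sum_le_sum_abs _ _).trans ?_
      have h3 : ∀ e, |f (D (p, e)) - f (D (q, e))| ≤ 2 * c := by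
        intro e
        rw [hDpq q p e, mul_assoc, Equiv.swap_mul_eq_mul_swap, Equiv.swap_mul_eq_mul_swap]
        set σ := D (q, e)
        have a1 := hf (σ * Equiv.swap (σ⁻¹ 0) (σ⁻¹ q)) ((σ * Equiv.swap (σ⁻¹ 0) (σ⁻¹ q))⁻¹ 0)
          ((σ * Equiv.swap (σ⁻¹ 0) (σ⁻¹ q))⁻¹ p)
        have a2 := hf σ (σ⁻¹ 0) (σ⁻¹ q)
        have := abs_sub_le (f (σ * Equiv.swap (σ⁻¹ 0) (σ⁻¹ q) *
          Equiv.swap ((σ * Equiv.swap (σ⁻¹ 0) (σ⁻¹ q))⁻¹ 0)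
          ((σ * Equiv.swap (σ⁻¹ 0) (σ⁻¹ q))⁻¹ p))) (f (σ * Equiv.swap (σ⁻¹ 0) (σ⁻¹ q))) (f σ)
        linarith
      refine (Finset.sum_le_sum fun e _ => h3 e).trans (le_of_eq ?_)
      simp [Fintype.card_perm, mul_comm]
    have h4 := azuma_step (Nat.succ_pos n) m (2 * c) h2
    rw [hsplit (fun σ => Real.exp (f σ)), hsplit f]
    calc _ ≤ ∑ p, (n.factorial : ℝ) * Real.exp (m p + n * (2 * c ^ 2)) :=
          Finset.sum_le_sum fun p _ => h1 p
      _ = (n.factorial : ℝ) * Real.exp (n * (2 * c ^ 2)) * ∑ p, Real.exp (m p) := by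
          rw [Finset.mul_sum]
          refine Finset.sum_congr rfl fun p _ => ?_
          rw [Real.exp_add]; ring
      _ ≤ (n.factorial : ℝ) * Real.exp (n * (2 * c ^ 2)) *
          ((n + 1 : ℕ) * Real.exp ((∑ p, m p) / (n + 1 : ℕ) + (2 * c) ^ 2 / 2)) :=
          mul_le_mul_of_nonneg_left h4 (by positivity)
      _ = _ := by
          have e1 : (∑ p, ∑ e, f (D (p, e))) / ((n + 1).factorial : ℝ) = (∑ p, m p) / (n + 1 : ℕ) := by
            simp only [m]
            rw [← Finset.sum_div, Nat.factorial_succ, div_div]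
            push_cast
            rw [mul_comm]
          rw [e1, Nat.factorial_succ]
          have e2 : (∑ p, m p) / ((n + 1 : ℕ) : ℝ) + ((n + 1 : ℕ) : ℝ) * (2 * c ^ 2)
            = n * (2 * c ^ 2) + ((∑ p, m p) / ((n + 1 : ℕ) : ℝ) + (2 * c) ^ 2 / 2) := by
            push_cast; ring
          rw [e2, Real.exp_add (n * (2 * c ^ 2))]
          push_cast
          ring

lemma azuma_tail {n : ℕ} (f : Equiv.Perm (Fin n) → ℝ) (c τ μ : ℝ) (hn : 0 < n) (hc : 0 < c) (hτ : 0 ≤ τ)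
    (hf : ∀ σ x y, |f (σ * Equiv.swap x y) - f σ| ≤ c)
    (hμ : (∑ σ, f σ) / (n.factorial : ℝ) ≤ μ)
    (P : Equiv.Perm (Fin n) → Prop) [DecidablePred P] (hP : ∀ σ, P σ → μ + τ ≤ f σ) :
    ((univ.filter P).card : ℝ) ≤
      (n.factorial : ℝ) * Real.exp (-(τ ^ 2 / (8 * n * c ^ 2))) := by
  have hn' : (0:ℝ) < n := by exact_mod_cast hn
  set l := τ / (4 * n * c ^ 2) with hl
  have hl0 : 0 ≤ l := by positivity
  refine (card_markov P (fun σ => l * f σ) (l * (μ + τ))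
    (fun σ hσ => mul_le_mul_of_nonneg_left (hP σ hσ) hl0)).trans ?_
  have h1 := azuma n (fun σ => l * f σ) (l * c) (by
    intro σ x y
    rw [← mul_sub, abs_mul, abs_of_nonneg hl0]
    exact mul_le_mul_of_nonneg_left (hf σ x y) hl0)
  refine (mul_le_mul_of_nonneg_left h1 (Real.exp_pos _).le).trans ?_
  rw [mul_left_comm, ← Real.exp_add]
  refine mul_le_mul_of_nonneg_left (Real.exp_le_exp.mpr ?_) (by positivity)
  rw [← Finset.mul_sum, mul_div_assoc]
  have h2 := mul_le_mul_of_nonneg_left hμ hl0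
  have h3 : n * (2 * (l * c) ^ 2) - l * τ = -(τ ^ 2 / (8 * n * c ^ 2)) := by
    rw [hl]; field_simp; ring
  linarith

end PM

namespace PM

lemma eb_compl {ν : ℕ} (G : Finset (Fin ν × Fin ν)) (S T : Finset (Fin ν)) :
    eb G S univ = eb G S T + eb G S (univ \ T) := by
  unfold eb
  simp only [Finset.card_filter]
  rw [← Finset.sum_add_distrib]
  refine Finset.sum_congr rfl fun x _ => ?_
  by_cases h1 : x.2 ∈ T <;> simp [h1]

lemma eb_single {ν : ℕ} (G : Finset (Fin ν × Fin ν)) (a : Fin ν) (U : Finset (Fin ν)) :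
    eb G {a} U = ∑ b ∈ U, if (a, b) ∈ G then 1 else 0 := by
  rw [← Finset.card_filter]
  unfold eb
  refine Finset.card_bij' (fun x _ => x.2) (fun b _ => (a, b)) ?_ ?_ ?_ ?_
  · rintro ⟨x, y⟩ h
    simp only [mem_filter, mem_singleton] at h ⊢
    obtain ⟨h1, rfl, h3⟩ := h
    exact ⟨h3, h1⟩
  · intro b h
    simp only [mem_filter, mem_singleton] at h ⊢
    exact ⟨h.2, by trivial, h.1⟩
  · rintro ⟨x, y⟩ h
    simp only [mem_filter, mem_singleton] at h ⊢
    simp [h.2.1]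
  · intro b h; rfl

lemma sq_sum_le {ν : ℕ} (G : Finset (Fin ν × Fin ν)) (U : Finset (Fin ν)) (K : ℝ) (hK : 0 ≤ K)
    (hcod : ∀ b b', b ≠ b' → ((univ.filter fun a => (a, b) ∈ G ∧ (a, b') ∈ G).card : ℝ) ≤ K) :
    ∑ a, (eb G {a} U : ℝ) ^ 2 ≤ U.card * ν + U.card ^ 2 * K := by
  have h1 : ∀ a, (eb G {a} U : ℝ) ^ 2 = ∑ b ∈ U, ∑ b' ∈ U, if (a, b) ∈ G ∧ (a, b') ∈ G then (1:ℝ) else 0 := by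
    intro a
    rw [eb_single]
    push_cast
    rw [sq, Finset.sum_mul_sum]
    refine Finset.sum_congr rfl fun b _ => Finset.sum_congr rfl fun b' _ => ?_
    by_cases h : (a, b) ∈ G <;> by_cases h' : (a, b') ∈ G <;> simp [h, h']
  simp_rw [h1]
  rw [Finset.sum_comm]
  have h2 : ∀ b ∈ U, ∑ a, ∑ b' ∈ U, (if (a, b) ∈ G ∧ (a, b') ∈ G then (1:ℝ) else 0) ≤ ν + U.card * K := by
    intro b hb
    rw [Finset.sum_comm]
    have h3 : ∀ b' ∈ U, ∑ a, (if (a, b) ∈ G ∧ (a, b') ∈ G then (1:ℝ) else 0)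
        ≤ (if b' = b then (ν : ℝ) else 0) + K := by
      intro b' _
      have : ∑ a, (if (a, b) ∈ G ∧ (a, b') ∈ G then (1:ℝ) else 0)
        = ((univ.filter fun a => (a, b) ∈ G ∧ (a, b') ∈ G).card : ℝ) := by
        rw [Finset.card_filter]; push_cast; rfl
      rw [this]
      by_cases hbb : b' = b
      · rw [if_pos hbb]
        have h4 : (univ.filter fun a => (a, b) ∈ G ∧ (a, b') ∈ G).card ≤ ν := by
          simpa using Finset.card_le_univ (univ.filter fun a => (a, b) ∈ G ∧ (a, b') ∈ G)
        have h5 : ((univ.filter fun a => (a, b) ∈ G ∧ (a, b') ∈ G).card : ℝ) ≤ ν := by exact_mod_cast h4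
        linarith
      · rw [if_neg hbb]
        have := hcod b b' (Ne.symm hbb)
        linarith
    refine (Finset.sum_le_sum h3).trans ?_
    rw [Finset.sum_add_distrib]
    simp [hb]
  refine (Finset.sum_le_sum h2).trans (le_of_eq ?_)
  simp
  ring

lemma num1 {ν s u ε : ℝ} (hν : 0 < ν) (hs : 0 ≤ s) (hu : 0 ≤ u) (hus : u ≤ s) (huν : u ≤ ν - s)
    (hε0 : 0 ≤ ε) (hε : ε ≤ 1 / 60) : ν * s / 8 ≤ (1 - 5 * ε) * ν * s - u * (ν + s) / 2 := by
  have h0 : ε * (ν * s) ≤ 1 / 60 * (ν * s) := mul_le_mul_of_nonneg_right hε (by positivity)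
  have key : u * (ν + s) ≤ 3 / 2 * (ν * s) := by
    by_cases h : 2 * s ≤ ν
    · have h1 : u * (ν + s) ≤ s * (ν + s) := mul_le_mul_of_nonneg_right hus (by linarith)
      nlinarith
    · push Not at h
      have h1 : u * (ν + s) ≤ (ν - s) * (ν + s) := mul_le_mul_of_nonneg_right huν (by linarith)
      nlinarith
  nlinarith

lemma num2 {ν s u ε : ℝ} (hν : 0 < ν) (hs : 0 ≤ s) (hu : 0 ≤ u) (hus : u ≤ s) (huν : u ≤ ν - s)
    (hε0 : 0 ≤ ε) (hε : ε ≤ 1 / 60) :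
    (1 - 10 * ε) * ν * (s - u) ≤ (1 - 5 * ε) * ν * s - u * (ν + s) / 2 := by
  have key : 0 ≤ 5 * ε * ν * (s - 2 * u) + u * (ν - s) / 2 := by
    by_cases h : 2 * u ≤ s
    · have h1 : 0 ≤ 5 * ε * ν * (s - 2 * u) := mul_nonneg (by positivity) (by linarith)
      have h2 : 0 ≤ u * (ν - s) := mul_nonneg hu (by linarith)
      linarith
    · push Not at h
      have h1 : ν / 3 ≤ ν - s := by linarith
      have h2 : u * (ν / 3) ≤ u * (ν - s) := mul_le_mul_of_nonneg_left h1 hu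
      have h3 : ε * (ν * (2 * u - s)) ≤ 1 / 60 * (ν * (2 * u - s)) :=
        mul_le_mul_of_nonneg_right hε (mul_nonneg hν.le (by linarith))
      have h4 : 0 ≤ ν * s := by positivity
      nlinarith
  nlinarith

lemma pr_cut {ν : ℕ} (hν : 0 < ν) (G : Finset (Fin ν × Fin ν)) (p ε : ℝ) (hp : 0 < p)
    (hε0 : 0 < ε) (hε : ε ≤ 1 / 60)
    (hdeg : ∀ a, (1 - 3 * ε) * (ν * p) ≤ eb G {a} univ)
    (hcod : ∀ b b', b ≠ b' → ((univ.filter fun a => (a, b) ∈ G ∧ (a, b') ∈ G).card : ℝ) ≤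
      (1 + 2 * ε) * (ν * p ^ 2))
    (hsq : Real.sqrt ν ≤ ε * (ν * p))
    (S T : Finset (Fin ν)) (hST : ν < S.card + T.card) (hle : S.card ≤ T.card) :
    (ν * p) * S.card / 8 ≤ (eb G S T : ℝ) ∧
    (1 - 10 * ε) * (ν * p) * ((S.card : ℝ) + T.card - ν) ≤ (eb G S T : ℝ) := by
  have hν' : (0:ℝ) < ν := by exact_mod_cast hν
  set U := univ \ T with hU
  have hUc : (U.card : ℝ) = ν - T.card := by
    have h1 : U.card + T.card = ν := by
      have := Finset.card_sdiff_add_card_eq_card (Finset.subset_univ T)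
      simpa using this
    have : (U.card : ℝ) + T.card = ν := by exact_mod_cast h1
    linarith
  have hg : 0 < Real.sqrt ν := Real.sqrt_pos.mpr hν'
  have hgg : Real.sqrt ν * Real.sqrt ν = ν := Real.mul_self_sqrt hν'.le
  set g := Real.sqrt ν
  set s : ℝ := (S.card : ℝ) with hsdef
  set t : ℝ := (T.card : ℝ) with htdef
  set u : ℝ := (U.card : ℝ) with hudef
  have hs0 : 0 ≤ s := by positivity
  have hu0 : 0 ≤ u := by positivity
  have hSTr : (ν : ℝ) < s + t := by rw [hsdef, htdef]; exact_mod_cast hST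
  have hler : s ≤ t := by rw [hsdef, htdef]; exact_mod_cast hle
  set K := (1 + 2 * ε) * (ν * p ^ 2) with hK
  have hK0 : 0 ≤ K := by positivity
  set c := u * p + g with hc
  have hc0 : 0 < c := by positivity
  have hsum := sq_sum_le G U K hK0 hcod
  have hEU : (eb G S U : ℝ) ≤ (u * ν + u ^ 2 * K) / (2 * c) + s * c / 2 := by
    rw [eb_univ_left_sum]
    push_cast
    have h1 : ∀ a ∈ S, (eb G {a} U : ℝ) ≤ (eb G {a} U : ℝ) ^ 2 / (2 * c) + c / 2 := by
      intro a _
      have : (eb G {a} U : ℝ) ^ 2 / (2 * c) + c / 2 - (eb G {a} U : ℝ)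
        = ((eb G {a} U : ℝ) - c) ^ 2 / (2 * c) := by field_simp; ring
      have h2 : 0 ≤ ((eb G {a} U : ℝ) - c) ^ 2 / (2 * c) := by positivity
      linarith
    refine (Finset.sum_le_sum h1).trans ?_
    rw [Finset.sum_add_distrib, ← Finset.sum_div]
    have h3 : ∑ a ∈ S, (eb G {a} U : ℝ) ^ 2 ≤ u * ν + u ^ 2 * K :=
      (Finset.sum_le_sum_of_subset_of_nonneg (Finset.subset_univ S) (fun _ _ _ => by positivity)).trans hsum
    have h4 : ∑ _a ∈ S, c / 2 = s * c / 2 := by simp [s]; ring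
    rw [h4]
    have := div_le_div_of_nonneg_right h3 (show 0 ≤ 2 * c by positivity)
    linarith
  have hb1 : (u * ν + u ^ 2 * K) / (2 * c) ≤ u * g / 2 + u * ((1 + 2 * ε) * (ν * p)) / 2 := by
    rw [div_le_iff₀ (by positivity)]
    have e1 : u * ν = u * (g * g) := by rw [hgg]
    rw [e1, hK, hc]
    have : 0 ≤ u * g * (u * p) := by positivity
    have : 0 ≤ u * ((1 + 2 * ε) * (ν * p)) * g := by positivity
    nlinarith
  have htot := eb_compl G S T
  have htot' : (eb G S univ : ℝ) = eb G S T + eb G S U := by exact_mod_cast htot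
  have hlow : (1 - 3 * ε) * (ν * p) * s ≤ eb G S univ := by
    rw [eb_univ_left_sum]
    push_cast
    calc _ = ∑ _a ∈ S, (1 - 3 * ε) * (ν * p) := by simp [s]; ring
      _ ≤ _ := Finset.sum_le_sum fun a _ => hdeg a
  have hus : u ≤ s := by linarith
  have huν : u ≤ ν - s := by linarith
  -- main lower bound
  have hmain : p * ((1 - 5 * ε) * ν * s - u * (ν + s) / 2) ≤ eb G S T := by
    have h1 : u * g ≤ s * g := mul_le_mul_of_nonneg_right hus hg.le
    have h2 : s * g ≤ s * (ε * (ν * p)) := mul_le_mul_of_nonneg_left hsq hs0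
    have h3 : ε * (ν * p) * u ≤ ε * (ν * p) * s := mul_le_mul_of_nonneg_left hus (by positivity)
    have h4 : s * c = s * (u * p) + s * g := by rw [hc]; ring
    nlinarith
  have n1 := num1 hν' hs0 hu0 hus huν hε0.le hε
  have n2 := num2 hν' hs0 hu0 hus huν hε0.le hε
  constructor
  · refine le_trans ?_ hmain
    have := mul_le_mul_of_nonneg_left n1 hp.le
    linarith
  · refine le_trans ?_ hmain
    have := mul_le_mul_of_nonneg_left n2 hp.le
    have e : s + t - ν = s - u := by rw [hUc]; ring
    rw [e]
    linarith

lemma eb_swap {ν : ℕ} (G : Finset (Fin ν × Fin ν)) (S T : Finset (Fin ν)) :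
    eb (G.image Prod.swap) T S = eb G S T := by
  unfold eb
  refine Finset.card_bij' (fun x _ => x.swap) (fun x _ => x.swap) ?_ ?_ ?_ ?_
  · rintro ⟨x, y⟩ h
    simp only [mem_filter, mem_image, Prod.exists, Prod.swap_prod_mk, Prod.mk.injEq] at h ⊢
    obtain ⟨⟨a, b, h1, rfl, rfl⟩, h2, h3⟩ := h
    exact ⟨h1, h3, h2⟩
  · rintro ⟨x, y⟩ h
    simp only [mem_filter, mem_image, Prod.exists, Prod.swap_prod_mk, Prod.mk.injEq] at h ⊢
    exact ⟨⟨x, y, h.1, rfl, rfl⟩, h.2.2, h.2.1⟩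
  · intros; simp
  · intros; simp

lemma pr_cut_both {ν : ℕ} (hν : 0 < ν) (G : Finset (Fin ν × Fin ν)) (p ε : ℝ) (hp : 0 < p)
    (hε0 : 0 < ε) (hε : ε ≤ 1 / 60)
    (hdeg : ∀ a, (1 - 3 * ε) * (ν * p) ≤ eb G {a} univ)
    (hdeg' : ∀ b, (1 - 3 * ε) * (ν * p) ≤ eb G univ {b})
    (hcod : ∀ b b', b ≠ b' → ((univ.filter fun a => (a, b) ∈ G ∧ (a, b') ∈ G).card : ℝ) ≤
      (1 + 2 * ε) * (ν * p ^ 2))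
    (hcod' : ∀ a a', a ≠ a' → ((univ.filter fun b => (a, b) ∈ G ∧ (a', b) ∈ G).card : ℝ) ≤
      (1 + 2 * ε) * (ν * p ^ 2))
    (hsq : Real.sqrt ν ≤ ε * (ν * p))
    (S T : Finset (Fin ν)) (hST : ν < S.card + T.card) :
    (ν * p) * (min S.card T.card : ℕ) / 8 ≤ (eb G S T : ℝ) ∧
    (1 - 10 * ε) * (ν * p) * ((S.card : ℝ) + T.card - ν) ≤ (eb G S T : ℝ) := by
  rcases le_total S.card T.card with h | h
  · rw [min_eq_left h]
    exact pr_cut hν G p ε hp hε0 hε hdeg hcod hsq S T hST h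
  · rw [min_eq_right h]
    have := pr_cut hν (G.image Prod.swap) p ε hp hε0 hε (fun a => by rw [eb_swap]; exact hdeg' a)
      (fun b b' hb => by
        have : (univ.filter fun a => (a, b) ∈ G.image Prod.swap ∧ (a, b') ∈ G.image Prod.swap)
          = univ.filter fun a => (b, a) ∈ G ∧ (b', a) ∈ G := by
          ext a; simp [Prod.swap_eq_iff_eq_swap]
        rw [this]
        exact hcod' b b' hb) hsq T S (by omega) h
    rw [eb_swap] at this
    refine ⟨this.1, ?_⟩
    rw [add_comm (S.card : ℝ)]
    exact this.2

lemma sum_pow_card (ν : ℕ) (y : ℝ) : ∑ S : Finset (Fin ν), y ^ S.card = (1 + y) ^ ν := by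
  have := Finset.prod_one_add (f := fun _ : Fin ν => y) univ
  simp only [prod_const, card_univ, Fintype.card_fin, powerset_univ] at this
  exact this.symm

lemma cut_sum (ν : ℕ) (κ : ℝ) (hκ : 0 ≤ κ) (hy : ν * Real.exp (-(κ / 2)) ≤ 1) :
    ∑ ST ∈ univ.filter (fun ST : Finset (Fin ν) × Finset (Fin ν) => ν < ST.1.card + ST.2.card),
      Real.exp (-(κ * (min ST.1.card ST.2.card : ℕ))) ≤ 12 * (ν * Real.exp (-(κ / 2))) := by
  set y := Real.exp (-(κ / 2)) with hydef
  have hy0 : 0 < y := Real.exp_pos _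
  have hy1 : y ≤ 1 := Real.exp_le_one_iff.mpr (by linarith)
  let w : Finset (Fin ν) → ℝ := fun S => if S = ∅ then 0 else y ^ S.card
  have hw0 : ∀ S, 0 ≤ w S := by intro S; simp only [w]; split_ifs <;> positivity
  have hwsum : ∑ S, w S = (1 + y) ^ ν - 1 := by
    have h1 : ∀ S : Finset (Fin ν), w S = y ^ S.card - if S = ∅ then 1 else 0 := by
      intro S; simp only [w]; split_ifs with h
      · simp [h]
      · simp
    simp_rw [h1]
    rw [Finset.sum_sub_distrib, sum_pow_card]
    simp
  have hterm : ∀ S T : Finset (Fin ν), ν < S.card + T.card → S.card ≤ T.card →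
      Real.exp (-(κ * (S.card : ℝ))) ≤ w S * y ^ (univ \ T).card := by
    intro S T h1 h2
    have hU : (univ \ T).card + T.card = ν := by
      have := Finset.card_sdiff_add_card_eq_card (Finset.subset_univ T)
      simpa using this
    have hS : S ≠ ∅ := by
      rintro rfl
      have := Finset.card_le_univ T
      simp at h1 this; omega
    simp only [w, if_neg hS]
    rw [← pow_add]
    have e : Real.exp (-(κ * (S.card : ℝ))) = y ^ (2 * S.card) := by
      rw [hydef, ← Real.exp_nat_mul]; congr 1; push_cast; ring
    rw [e]
    exact pow_le_pow_of_le_one hy0.le hy1 (by omega)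
  have hbound : ∀ ST : Finset (Fin ν) × Finset (Fin ν), ν < ST.1.card + ST.2.card →
      Real.exp (-(κ * (min ST.1.card ST.2.card : ℕ))) ≤
      w ST.1 * y ^ (univ \ ST.2).card + y ^ (univ \ ST.1).card * w ST.2 := by
    rintro ⟨S, T⟩ h
    have p1 : 0 ≤ w S * y ^ (univ \ T).card := mul_nonneg (hw0 _) (by positivity)
    have p2 : 0 ≤ y ^ (univ \ S).card * w T := mul_nonneg (by positivity) (hw0 _)
    rcases le_total S.card T.card with h' | h'
    · simp only [min_eq_left h']
      have := hterm S T h h'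
      linarith
    · simp only [min_eq_right h']
      have := hterm T S (by simpa [add_comm] using h) h'
      simp only at *
      linarith
  have hc : ∑ T : Finset (Fin ν), y ^ (univ \ T).card = (1 + y) ^ ν := by
    rw [← sum_pow_card]
    have := Equiv.sum_comp (Function.Involutive.toPerm (compl : Finset (Fin ν) → Finset (Fin ν)) compl_involutive)
      (fun T => y ^ T.card)
    rw [← this]
    rfl
  calc _ ≤ ∑ ST ∈ univ.filter (fun ST : Finset (Fin ν) × Finset (Fin ν) => ν < ST.1.card + ST.2.card),
      (w ST.1 * y ^ (univ \ ST.2).card + y ^ (univ \ ST.1).card * w ST.2) :=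
        Finset.sum_le_sum fun ST h => hbound ST (Finset.mem_filter.mp h).2
    _ ≤ ∑ ST : Finset (Fin ν) × Finset (Fin ν),
      (w ST.1 * y ^ (univ \ ST.2).card + y ^ (univ \ ST.1).card * w ST.2) :=
        Finset.sum_le_sum_of_subset_of_nonneg (Finset.filter_subset _ _) (fun ST _ _ =>
          add_nonneg (mul_nonneg (hw0 _) (by positivity)) (mul_nonneg (by positivity) (hw0 _)))
    _ = 2 * (((1 + y) ^ ν - 1) * (1 + y) ^ ν) := by
        rw [Finset.sum_add_distrib, Fintype.sum_prod_type, Fintype.sum_prod_type]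
        simp only
        rw [← Finset.sum_mul_sum, ← Finset.sum_mul_sum, hwsum, hc]
        ring
    _ ≤ _ := by
        have h1 : (1 + y) ^ ν ≤ 1 + 2 * (ν * y) := by
          calc (1 + y) ^ ν ≤ (Real.exp y) ^ ν := by
                refine pow_le_pow_left₀ (by positivity) ?_ _
                have := Real.add_one_le_exp y; linarith
            _ = Real.exp (ν * y) := by rw [← Real.exp_nat_mul]
            _ ≤ _ := by
                have := exp_quad (x := ν * y) (by positivity) hy
                have h2 : 0 ≤ (ν:ℝ) * y := by positivity
                nlinarith
        have h2 : 1 ≤ (1 + y) ^ ν := one_le_pow₀ (by linarith)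
        have h3 : (1 + y) ^ ν ≤ 3 := by linarith
        nlinarith

end PM


namespace PM

/-- the block in column `a` with rows `I` -/
def blk {k ν : ℕ} (I : Finset (Fin k)) (a : Fin ν) : Finset (Fin (k * ν)) :=
  I.image fun i => finProdFinEquiv (i, a)

lemma mem_blk {k ν : ℕ} (I : Finset (Fin k)) (a : Fin ν) (x : Fin (k * ν)) :
    x ∈ blk I a ↔ (finProdFinEquiv.symm x).1 ∈ I ∧ (finProdFinEquiv.symm x).2 = a := by
  unfold blk
  simp only [mem_image]
  constructor
  · rintro ⟨i, hi, rfl⟩; simpa using hi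
  · rintro ⟨h1, rfl⟩; exact ⟨_, h1, finProdFinEquiv.apply_symm_apply x⟩

lemma card_blk {k ν : ℕ} (I : Finset (Fin k)) (a : Fin ν) : (blk I a).card = I.card := by
  unfold blk
  refine Finset.card_image_of_injective _ fun i j h => ?_
  simpa using h

lemma card_img {n : ℕ} (σ : Equiv.Perm (Fin n)) (U : Finset (Fin n)) :
    (U.image σ).card = U.card := Finset.card_image_of_injective _ σ.injective

/-- number of columns whose block lands in `N` -/
def Zc {k ν : ℕ} (I : Finset (Fin k)) (N : Finset (Finset (Fin (k * ν))))
    (σ : Equiv.Perm (Fin (k * ν))) : ℕ :=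
  (univ.filter fun a : Fin ν => (blk I a).image σ ∈ N).card

lemma Zc_le {k ν : ℕ} (I : Finset (Fin k)) (N : Finset (Finset (Fin (k * ν))))
    (σ : Equiv.Perm (Fin (k * ν))) (x y : Fin (k * ν)) :
    Zc I N (σ * Equiv.swap x y) ≤ Zc I N σ + 2 := by
  unfold Zc
  set cx := (finProdFinEquiv.symm x).2
  set cy := (finProdFinEquiv.symm y).2
  have hsub : (univ.filter fun a : Fin ν => (blk I a).image (σ * Equiv.swap x y) ∈ N)
      ⊆ (univ.filter fun a : Fin ν => (blk I a).image σ ∈ N) ∪ {cx, cy} := by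
    intro a ha
    simp only [mem_filter, mem_univ, true_and, mem_union, mem_insert, mem_singleton] at ha ⊢
    by_cases h1 : a = cx
    · right; left; exact h1
    by_cases h2 : a = cy
    · right; right; exact h2
    left
    have : (blk I a).image (σ * Equiv.swap x y) = (blk I a).image σ := by
      refine Finset.image_congr fun z hz => ?_
      have hz' := (mem_blk I a z).mp hz
      have hzx : z ≠ x := by rintro rfl; exact h1 hz'.2.symm
      have hzy : z ≠ y := by rintro rfl; exact h2 hz'.2.symm
      simp [Equiv.swap_apply_of_ne_of_ne hzx hzy]
    rwa [this] at ha
  refine (Finset.card_le_card hsub).trans ((Finset.card_union_le _ _).trans ?_)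
  have := Finset.card_le_two (a := cx) (b := cy)
  omega

lemma Zc_lip {k ν : ℕ} (I : Finset (Fin k)) (N : Finset (Finset (Fin (k * ν))))
    (σ : Equiv.Perm (Fin (k * ν))) (x y : Fin (k * ν)) :
    |(Zc I N (σ * Equiv.swap x y) : ℝ) - Zc I N σ| ≤ 2 := by
  have h1 := Zc_le I N σ x y
  have h2 := Zc_le I N (σ * Equiv.swap x y) x y
  rw [mul_assoc, Equiv.swap_mul_self, mul_one] at h2
  have h1' : (Zc I N (σ * Equiv.swap x y) : ℝ) ≤ Zc I N σ + 2 := by exact_mod_cast h1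
  have h2' : (Zc I N σ : ℝ) ≤ Zc I N (σ * Equiv.swap x y) + 2 := by exact_mod_cast h2
  rw [abs_le]; constructor <;> linarith

lemma exists_perm_image {n : ℕ} (W W' : Finset (Fin n)) (h : W.card = W'.card) :
    ∃ τ : Equiv.Perm (Fin n), W.image τ = W' := by
  let e : {x // x ∈ W} ≃ {x // x ∈ W'} := Finset.equivOfCardEq h
  refine ⟨e.extendSubtype, ?_⟩
  refine Finset.eq_of_subset_of_card_le ?_ ?_
  · intro y hy
    obtain ⟨x, hx, rfl⟩ := Finset.mem_image.mp hy
    exact e.extendSubtype_mem x hx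
  · rw [card_img, h]

lemma count_image {n : ℕ} (U W : Finset (Fin n)) (h : W.card = U.card) :
    (univ.filter fun σ : Equiv.Perm (Fin n) => U.image σ = W).card * n.choose U.card = n.factorial := by
  have hconst : ∀ W' ∈ powersetCard U.card (univ : Finset (Fin n)),
      (univ.filter fun σ : Equiv.Perm (Fin n) => U.image σ = W').card
      = (univ.filter fun σ : Equiv.Perm (Fin n) => U.image σ = W).card := by
    intro W' hW'
    obtain ⟨τ, hτ⟩ := exists_perm_image W' W ((mem_powersetCard_univ.mp hW').trans h.symm)
    have hτ' : W.image ⇑τ⁻¹ = W' := by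
      rw [← hτ, Finset.image_image]
      simp
    refine Finset.card_bij' (fun σ _ => τ * σ) (fun σ _ => τ⁻¹ * σ) ?_ ?_ ?_ ?_
    · intro σ hσ
      simp only [mem_filter, mem_univ, true_and] at hσ ⊢
      rw [Equiv.Perm.coe_mul, ← Finset.image_image, hσ, hτ]
    · intro σ hσ
      simp only [mem_filter, mem_univ, true_and] at hσ ⊢
      rw [Equiv.Perm.coe_mul, ← Finset.image_image, hσ, hτ']
    · intro σ _; simp
    · intro σ _; simp
  have h1 := Finset.card_eq_sum_card_fiberwise (s := (univ : Finset (Equiv.Perm (Fin n))))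
    (t := powersetCard U.card (univ : Finset (Fin n))) (f := fun σ : Equiv.Perm (Fin n) => U.image σ)
    (fun σ _ => by simp [card_img])
  rw [Finset.sum_congr rfl hconst] at h1
  simp only [card_univ, Fintype.card_perm, Fintype.card_fin, sum_const, card_powersetCard,
    smul_eq_mul] at h1
  rw [h1, mul_comm]

lemma count_image_real {n : ℕ} (U W : Finset (Fin n)) (h : W.card = U.card) :
    ((univ.filter fun σ : Equiv.Perm (Fin n) => U.image σ = W).card : ℝ)
      = n.factorial / n.choose U.card := by
  have h1 := count_image U W h
  have h2 : 0 < n.choose U.card := Nat.choose_pos (by simpa using Finset.card_le_univ U)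
  have h2' : (0:ℝ) < n.choose U.card := by exact_mod_cast h2
  rw [eq_div_iff h2'.ne']
  exact_mod_cast h1

lemma Zc_mean {k ν : ℕ} (I : Finset (Fin k)) (N : Finset (Finset (Fin (k * ν))))
    (hN : ∀ W ∈ N, W.card = I.card) :
    (∑ σ, (Zc I N σ : ℝ)) / ((k * ν).factorial : ℝ) = ν * N.card / ((k * ν).choose I.card : ℝ) := by
  have hf : (0:ℝ) < ((k * ν).factorial : ℝ) := by exact_mod_cast Nat.factorial_pos _
  have h1 : ∀ a : Fin ν, ∑ σ : Equiv.Perm (Fin (k * ν)), (if (blk I a).image σ ∈ N then (1:ℝ) else 0)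
      = N.card * ((k * ν).factorial / (k * ν).choose I.card) := by
    intro a
    have h2 : ∀ σ : Equiv.Perm (Fin (k * ν)), (if (blk I a).image σ ∈ N then (1:ℝ) else 0)
        = ∑ W ∈ N, if (blk I a).image σ = W then (1:ℝ) else 0 := by
      intro σ; simp
    simp_rw [h2]
    rw [Finset.sum_comm]
    have h3 : ∀ W ∈ N, ∑ σ : Equiv.Perm (Fin (k * ν)), (if (blk I a).image σ = W then (1:ℝ) else 0)
        = (k * ν).factorial / (k * ν).choose I.card := by
      intro W hW
      have := count_image_real (blk I a) W (by rw [card_blk]; exact hN W hW)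
      rw [card_blk] at this
      rw [← this, Finset.card_filter]
      push_cast; rfl
    rw [Finset.sum_congr rfl h3]
    simp
  have h4 : ∑ σ, (Zc I N σ : ℝ) = ν * (N.card * ((k * ν).factorial / (k * ν).choose I.card)) := by
    have : ∀ σ, (Zc I N σ : ℝ) = ∑ a, if (blk I a).image σ ∈ N then (1:ℝ) else 0 := by
      intro σ; unfold Zc; rw [Finset.card_filter]; push_cast; rfl
    simp_rw [this]
    rw [Finset.sum_comm, Finset.sum_congr rfl fun a _ => h1 a]
    simp
  rw [h4]
  field_simp

lemma Zc_upper {k ν : ℕ} (hn : 0 < k * ν) (I : Finset (Fin k)) (N : Finset (Finset (Fin (k * ν))))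
    (hN : ∀ W ∈ N, W.card = I.card) (μ τ : ℝ) (hτ : 0 ≤ τ)
    (hμ : ν * N.card / ((k * ν).choose I.card : ℝ) ≤ μ)
    (P : Equiv.Perm (Fin (k * ν)) → Prop) [DecidablePred P] (hP : ∀ σ, P σ → μ + τ ≤ Zc I N σ) :
    ((univ.filter P).card : ℝ) ≤
      ((k * ν).factorial : ℝ) * Real.exp (-(τ ^ 2 / (32 * (k * ν : ℕ)))) := by
  have := azuma_tail (fun σ => (Zc I N σ : ℝ)) 2 τ μ hn (by norm_num) hτ (Zc_lip I N)
    (by rw [Zc_mean I N hN]; exact hμ) P hP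
  have e : (8 * ((k * ν : ℕ) : ℝ) * 2 ^ 2) = 32 * (k * ν : ℕ) := by ring
  rwa [e] at this

lemma Zc_lower {k ν : ℕ} (hn : 0 < k * ν) (I : Finset (Fin k)) (N : Finset (Finset (Fin (k * ν))))
    (hN : ∀ W ∈ N, W.card = I.card) (μ τ : ℝ) (hτ : 0 ≤ τ)
    (hμ : μ ≤ ν * N.card / ((k * ν).choose I.card : ℝ))
    (P : Equiv.Perm (Fin (k * ν)) → Prop) [DecidablePred P] (hP : ∀ σ, P σ → Zc I N σ ≤ μ - τ) :
    ((univ.filter P).card : ℝ) ≤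
      ((k * ν).factorial : ℝ) * Real.exp (-(τ ^ 2 / (32 * (k * ν : ℕ)))) := by
  have := azuma_tail (fun σ => -(Zc I N σ : ℝ)) 2 τ (-μ) hn (by norm_num) hτ
    (fun σ x y => by
      have := Zc_lip I N σ x y
      rwa [← abs_neg, neg_sub, sub_neg_eq_add, neg_add_eq_sub])
    (by rw [Finset.sum_neg_distrib, neg_div, Zc_mean I N hN]; linarith) P
    (fun σ h => by have := hP σ h; linarith)
  have e : (8 * ((k * ν : ℕ) : ℝ) * 2 ^ 2) = 32 * (k * ν : ℕ) := by ring
  rwa [e] at this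

lemma choose_diff (n m : ℕ) : ∀ κ ≤ n, n.choose (m + 1) ≤ (n - κ).choose (m + 1) + κ * (n - 1).choose m := by
  intro κ
  induction κ with
  | zero => intro _; simp
  | succ κ ih =>
    intro h
    have h1 := ih (by omega)
    have h2 : n - κ = (n - (κ + 1)) + 1 := by omega
    rw [h2, Nat.choose_succ_succ'] at h1
    have h3 : (n - (κ + 1)).choose m ≤ (n - 1).choose m := Nat.choose_le_choose _ (by omega)
    nlinarith

lemma choose_ratio (n m κ : ℕ) (hn : 0 < n) (h : κ ≤ n) :
    (1 - (κ * m : ℝ) / n) * (n.choose m : ℝ) ≤ ((n - κ).choose m : ℝ) := by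
  have hn' : (0:ℝ) < n := by exact_mod_cast hn
  cases m with
  | zero => simp
  | succ m =>
    have h1 := choose_diff n m κ h
    have h2 : n * (n - 1).choose m = n.choose (m + 1) * (m + 1) := by
      obtain ⟨n', rfl⟩ : ∃ n', n = n' + 1 := ⟨n - 1, by omega⟩
      simpa using Nat.add_one_mul_choose_eq n' m
    have h1' : (n.choose (m + 1) : ℝ) ≤ (n - κ).choose (m + 1) + κ * (n - 1).choose m := by
      exact_mod_cast h1
    have h2' : (n : ℝ) * (n - 1).choose m = n.choose (m + 1) * (m + 1) := by exact_mod_cast h2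
    have h3 : ((n - 1).choose m : ℝ) = n.choose (m + 1) * (m + 1) / n := by
      rw [eq_div_iff hn'.ne', mul_comm]; exact h2'
    rw [h3] at h1'
    push_cast
    have : (1 - (κ * (m + 1) : ℝ) / n) * (n.choose (m + 1) : ℝ)
      = n.choose (m + 1) - κ * (n.choose (m + 1) * (m + 1) / n) := by field_simp
    rw [this]
    linarith

lemma card_powersetCard_le (n κ k : ℕ) (hn : 0 < n) (h : κ ≤ k) :
    ((powersetCard κ (univ : Finset (Fin n))).card : ℝ) ≤ (n : ℝ) ^ k := by
  rw [card_powersetCard, card_univ, Fintype.card_fin]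
  have h1 : n.choose κ ≤ n ^ κ := Nat.choose_le_pow n κ
  have h2 : n ^ κ ≤ n ^ k := Nat.pow_le_pow_right hn h
  exact_mod_cast h1.trans h2

/-- good permutation, one side -/
def GoodK {k ν : ℕ} (H : Finset (Finset (Fin (k * ν)))) (p ε : ℝ) (κ : ℕ) (I : Finset (Fin k))
    (σ : Equiv.Perm (Fin (k * ν))) : Prop :=
  (∀ S : Finset (Fin (k * ν)), S.card = κ →
    (1 - 3 * ε) * (ν * p) ≤ Zc I (hNbhd (k * ν) k H S) σ) ∧
  (∀ S₁ S₂ : Finset (Fin (k * ν)), S₁.card = κ → S₂.card = κ → Disjoint S₁ S₂ →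
    (Zc I (hNbhd (k * ν) k H S₁ ∩ hNbhd (k * ν) k H S₂) σ : ℝ) ≤ (1 + 2 * ε) * (ν * p ^ 2))

open scoped Classical in
lemma bad_count {k ν : ℕ} (hk : 0 < k) (hν : 0 < ν) (H : Finset (Finset (Fin (k * ν)))) (p ε : ℝ)
    (hp0 : 0 < p) (hp1 : p ≤ 1) (hε0 : 0 < ε) (hε1 : ε ≤ 1) (hkν : (k : ℝ) / ν ≤ ε)
    (κ : ℕ) (hκ : κ ≤ k) (I : Finset (Fin k)) (hI : I.card = k - κ)
    (hdeg : ∀ S : Finset (Fin (k * ν)), S.card = κ →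
      (1 - ε) * (((k * ν - κ).choose (k - κ) : ℕ) : ℝ) * p ≤ hDeg (k * ν) k H S)
    (hcod : ∀ S₁ S₂ : Finset (Fin (k * ν)), S₁.card = κ → S₂.card = κ → Disjoint S₁ S₂ →
      ((hNbhd (k * ν) k H S₁ ∩ hNbhd (k * ν) k H S₂).card : ℝ)
        ≤ (1 + ε) * (((k * ν - 2 * κ).choose (k - κ) : ℕ) : ℝ) * p ^ 2) :
    ((univ.filter fun σ => ¬ GoodK H p ε κ I σ).card : ℝ) ≤
      ((k * ν).factorial : ℝ) * (2 * ((k * ν : ℕ) : ℝ) ^ (2 * k) *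
        Real.exp (-(ε ^ 2 * ν * p ^ 4 / (32 * k)))) := by
  have hn : 0 < k * ν := Nat.mul_pos hk hν
  have hν' : (0:ℝ) < ν := by exact_mod_cast hν
  have hk' : (0:ℝ) < k := by exact_mod_cast hk
  set τ := ε * (ν * p ^ 2) with hτ
  have hτ0 : 0 ≤ τ := by positivity
  have hexp : τ ^ 2 / (32 * (k * ν : ℕ)) = ε ^ 2 * ν * p ^ 4 / (32 * k) := by
    rw [hτ]; push_cast; field_simp
  set E := Real.exp (-(ε ^ 2 * ν * p ^ 4 / (32 * k))) with hE
  have hchoose : 0 < (k * ν).choose I.card := Nat.choose_pos (by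
    have : k ≤ k * ν := Nat.le_mul_of_pos_right k hν
    omega)
  have hchoose' : (0:ℝ) < (k * ν).choose I.card := by exact_mod_cast hchoose
  have hnb : ∀ S : Finset (Fin (k * ν)), S.card = κ → ∀ W ∈ hNbhd (k * ν) k H S, W.card = I.card := by
    intro S hS W hW
    unfold hNbhd at hW
    rw [mem_filter] at hW
    rw [hI, ← hS]; exact hW.2.1
  have hA : ∀ S : Finset (Fin (k * ν)), S.card = κ →
      ((univ.filter fun σ => ¬ ((1 - 3 * ε) * (ν * p) ≤ Zc I (hNbhd (k * ν) k H S) σ)).card : ℝ)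
        ≤ ((k * ν).factorial : ℝ) * E := by
    intro S hS
    rw [hE, ← hexp]
    refine Zc_lower hn I _ (hnb S hS) ((1 - 2 * ε) * (ν * p)) τ hτ0 ?_ _ ?_
    · have h1 := hdeg S hS
      unfold hDeg at h1
      have h2 := choose_ratio (k * ν) (k - κ) κ hn (hκ.trans (Nat.le_mul_of_pos_right k hν))
      rw [hI] at hchoose' ⊢
      rw [le_div_iff₀ hchoose']
      have h3 : (κ * (k - κ : ℕ) : ℝ) / (k * ν : ℕ) ≤ ε := by
        refine le_trans ?_ hkν
        rw [div_le_div_iff₀ (by exact_mod_cast hn) hν']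
        have h4 : (κ : ℝ) ≤ k := by exact_mod_cast hκ
        have h5 : ((k - κ : ℕ) : ℝ) ≤ k := by exact_mod_cast Nat.sub_le k κ
        push_cast
        have h6 : (κ : ℝ) * (k - κ : ℕ) ≤ k * k := mul_le_mul h4 h5 (by positivity) (by positivity)
        nlinarith
      have h7 : (1 - ε) * ((k * ν).choose (k - κ) : ℝ) ≤ ((k * ν - κ).choose (k - κ) : ℝ) := by
        refine le_trans ?_ h2
        exact mul_le_mul_of_nonneg_right (by linarith) hchoose'.le
      have h8 : (1 - 2 * ε) * ((k * ν).choose (k - κ) : ℝ) ≤ (1 - ε) * ((k * ν - κ).choose (k - κ) : ℝ) := by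
        have := mul_le_mul_of_nonneg_left h7 (show 0 ≤ 1 - ε by linarith)
        have : 0 ≤ ε ^ 2 * ((k * ν).choose (k - κ) : ℝ) := by positivity
        nlinarith
      have h9 := mul_le_mul_of_nonneg_right h8 hp0.le
      have h10 := mul_le_mul_of_nonneg_left (h9.trans h1) hν'.le
      linarith
    · intro σ hσ
      push Not at hσ
      have : ε * (ν * p ^ 2) ≤ ε * (ν * p) := by
        refine mul_le_mul_of_nonneg_left (mul_le_mul_of_nonneg_left ?_ hν'.le) hε0.le
        nlinarith
      have e : (1 - 2 * ε) * (ν * p) - ε * (ν * p) = (1 - 3 * ε) * (ν * p) := by ring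
      rw [hτ]
      linarith
  have hB : ∀ S₁ S₂ : Finset (Fin (k * ν)), S₁.card = κ → S₂.card = κ → Disjoint S₁ S₂ →
      ((univ.filter fun σ => ¬ ((Zc I (hNbhd (k * ν) k H S₁ ∩ hNbhd (k * ν) k H S₂) σ : ℝ)
        ≤ (1 + 2 * ε) * (ν * p ^ 2))).card : ℝ)
        ≤ ((k * ν).factorial : ℝ) * E := by
    intro S₁ S₂ hS₁ hS₂ hd
    rw [hE, ← hexp]
    refine Zc_upper hn I (hNbhd (k * ν) k H S₁ ∩ hNbhd (k * ν) k H S₂) (fun W hW => hnb S₁ hS₁ W (mem_inter.mp hW).1)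
      ((1 + ε) * (ν * p ^ 2)) τ hτ0 ?_ _ ?_
    · rw [div_le_iff₀ hchoose', hI]
      have h1 := hcod S₁ S₂ hS₁ hS₂ hd
      have h2 : ((k * ν - 2 * κ).choose (k - κ) : ℝ) ≤ (k * ν).choose (k - κ) := by
        exact_mod_cast Nat.choose_le_choose _ (Nat.sub_le _ _)
      have h3 := mul_le_mul_of_nonneg_left h2 (show 0 ≤ (1 + ε) * p ^ 2 * ν by positivity)
      have h4 := mul_le_mul_of_nonneg_left h1 hν'.le
      linarith
    · intro σ hσ
      push Not at hσ
      rw [hτ]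
      linarith
  -- union bound
  set PS := powersetCard κ (univ : Finset (Fin (k * ν))) with hPS
  set PP := (PS ×ˢ PS).filter (fun q => Disjoint q.1 q.2) with hPP
  have hsub : (univ.filter fun σ => ¬ GoodK H p ε κ I σ) ⊆
      (PS.biUnion fun S => univ.filter fun σ =>
        ¬ ((1 - 3 * ε) * (ν * p) ≤ Zc I (hNbhd (k * ν) k H S) σ)) ∪
      (PP.biUnion fun q => univ.filter fun σ =>
        ¬ ((Zc I (hNbhd (k * ν) k H q.1 ∩ hNbhd (k * ν) k H q.2) σ : ℝ)
        ≤ (1 + 2 * ε) * (ν * p ^ 2))) := by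
    intro σ hσ
    simp only [mem_filter, mem_univ, true_and, GoodK, not_and_or, not_forall] at hσ
    simp only [mem_union, mem_biUnion, mem_filter, mem_univ, true_and]
    rcases hσ with ⟨S, hS, h⟩ | ⟨S₁, S₂, h1, h2, h3, h4⟩
    · left
      exact ⟨S, by simp [hPS, hS], h⟩
    · right
      exact ⟨(S₁, S₂), by simp [hPP, hPS, h1, h2, h3], h4⟩
  have hc1 : (PS.card : ℝ) ≤ ((k * ν : ℕ) : ℝ) ^ k := card_powersetCard_le _ _ _ hn hκ
  have hone : (1:ℝ) ≤ ((k * ν : ℕ) : ℝ) ^ k := one_le_pow₀ (by exact_mod_cast hn)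
  have hc2 : (PP.card : ℝ) ≤ ((k * ν : ℕ) : ℝ) ^ (2 * k) := by
    have h1 : PP.card ≤ PS.card * PS.card := by
      rw [← Finset.card_product]; exact Finset.card_filter_le _ _
    have h2 : (PP.card : ℝ) ≤ PS.card * PS.card := by exact_mod_cast h1
    rw [two_mul, pow_add]
    exact h2.trans (mul_le_mul hc1 hc1 (by positivity) (by positivity))
  have hc3 : (PS.card : ℝ) ≤ ((k * ν : ℕ) : ℝ) ^ (2 * k) := by
    rw [two_mul, pow_add]
    nlinarith
  have hF0 : 0 ≤ ((k * ν).factorial : ℝ) * E := by positivity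
  calc ((univ.filter fun σ => ¬ GoodK H p ε κ I σ).card : ℝ) ≤ _ :=
        Nat.cast_le.mpr ((Finset.card_le_card hsub).trans ((Finset.card_union_le _ _).trans
          (add_le_add Finset.card_biUnion_le Finset.card_biUnion_le)))
    _ ≤ ∑ _S ∈ PS, ((k * ν).factorial : ℝ) * E + ∑ _q ∈ PP, ((k * ν).factorial : ℝ) * E := by
        push_cast
        refine add_le_add (Finset.sum_le_sum fun S hS => hA S ?_) (Finset.sum_le_sum fun q hq => ?_)
        · simpa [hPS] using hS
        · simp only [hPP, hPS, mem_filter, mem_product, mem_powersetCard_univ] at hq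
          exact hB q.1 q.2 hq.1.1 hq.1.2 hq.2
    _ = (PS.card + PP.card) * (((k * ν).factorial : ℝ) * E) := by
        simp only [sum_const, nsmul_eq_mul]; ring
    _ ≤ (2 * ((k * ν : ℕ) : ℝ) ^ (2 * k)) * (((k * ν).factorial : ℝ) * E) :=
        mul_le_mul_of_nonneg_right (by linarith) hF0
    _ = _ := by ring

end PM


namespace PM

lemma exists_lab {R M : ℕ} (hM : 0 < M) (T : Finset (Fin R)) (h : T.card ≤ M) :
    ∃ g : Fin R → Fin M, ∀ i ∈ T, ∀ i' ∈ T, g i = g i' → i = i' := by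
  classical
  obtain ⟨φ⟩ := Function.Embedding.nonempty_of_card_le (α := {x // x ∈ T}) (β := Fin M)
    (by simpa using h)
  refine ⟨fun i => if h : i ∈ T then φ ⟨i, h⟩ else ⟨0, hM⟩, ?_⟩
  intro i hi i' hi' h
  simp only [hi, hi', dif_pos] at h
  simpa using φ.injective h

open scoped Classical in
lemma split_perms {β : Type*} [Fintype β] [DecidableEq β] {ν R M r : ℕ} (hM : 0 < M)
    (ed : Fin R → Fin ν × Fin ν → β) (hed : ∀ i, Function.Injective (ed i))
    (G : Fin R → Finset (Fin ν × Fin ν))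
    (hmult : ∀ e, (univ.filter fun i => ∃ x ∈ G i, ed i x = e).card ≤ M)
    (D L η : ℝ) (hD : 0 ≤ D) (hη0 : 0 ≤ η) (hη1 : η ≤ 1)
    (hcut : ∀ i (S T : Finset (Fin ν)), ν < S.card + T.card →
      D * (min S.card T.card : ℕ) / 8 ≤ eb (G i) S T ∧
      L * ((S.card : ℝ) + T.card - ν) ≤ eb (G i) S T)
    (hsmall : R * (12 * (ν * Real.exp (-(η ^ 2 * D / (64 * M))))) < 1)
    (hr : (r : ℝ) ≤ (1 - η) * L / M) :
    ∃ π : Fin R → Fin r → Equiv.Perm (Fin ν), (∀ i j a, (a, π i j a) ∈ G i) ∧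
      ∀ i j i' j', (i, j) ≠ (i', j') → ∀ a a', ed i (a, π i j a) ≠ ed i' (a', π i' j' a') := by
  have hM' : (0:ℝ) < M := by exact_mod_cast hM
  have : Nonempty (Fin M) := ⟨⟨0, hM⟩⟩
  choose lab hlab using fun e => exists_lab hM _ (hmult e)
  let G' : (β → Fin M) → Fin R → Finset (Fin ν × Fin ν) := fun c i =>
    (G i).filter fun x => c (ed i x) = lab (ed i x) i
  set κ := η ^ 2 * D / (32 * M) with hκ
  have hκ0 : 0 ≤ κ := by positivity
  have hκ2 : η ^ 2 * D / (64 * M) = κ / 2 := by rw [hκ]; field_simp; ring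
  rw [hκ2] at hsmall
  set Bad : Fin R → Finset (Fin ν) × Finset (Fin ν) → Finset (β → Fin M) := fun i ST =>
    univ.filter fun c => (eb (G' c i) ST.1 ST.2 : ℝ) ≤ (1 - η) * (eb (G i) ST.1 ST.2 / M)
      ∧ ¬ ((1 - η) * (eb (G i) ST.1 ST.2 / M) ≤ (eb (G' c i) ST.1 ST.2 : ℝ)) with hBad
  set Q := univ.filter (fun ST : Finset (Fin ν) × Finset (Fin ν) => ν < ST.1.card + ST.2.card) with hQ
  have hbad : ∀ i, ∀ ST ∈ Q, ((Bad i ST).card : ℝ) ≤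
      (M : ℝ) ^ Fintype.card β * Real.exp (-(κ * (min ST.1.card ST.2.card : ℕ))) := by
    intro i ST hST
    have hST' : ν < ST.1.card + ST.2.card := by simpa [hQ] using hST
    set E := (G i).filter fun x => x.1 ∈ ST.1 ∧ x.2 ∈ ST.2 with hE
    have hEcard : E.card = eb (G i) ST.1 ST.2 := rfl
    let A : β → Finset (Fin M) := fun e => if e ∈ E.image (ed i) then {lab e i} else ∅
    have hsum : (∑ e, ((A e).card : ℝ)) / Fintype.card (Fin M) = eb (G i) ST.1 ST.2 / M := by
      rw [Fintype.card_fin]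
      congr 1
      have : ∀ e, ((A e).card : ℝ) = if e ∈ E.image (ed i) then 1 else 0 := by
        intro e; simp only [A]; split_ifs <;> simp
      simp_rw [this]
      rw [Finset.sum_boole, Finset.filter_univ_mem, Finset.card_image_of_injective _ (hed i), hEcard]
    have h1 := chernoff_lower A η _ hη0 hη1 hsum
      (fun c => (eb (G' c i) ST.1 ST.2 : ℝ) ≤ (1 - η) * (eb (G i) ST.1 ST.2 / M)
      ∧ ¬ ((1 - η) * (eb (G i) ST.1 ST.2 / M) ≤ (eb (G' c i) ST.1 ST.2 : ℝ))) (by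
        intro c hc
        refine le_trans ?_ hc.1
        have : (univ.filter fun e => c e ∈ A e) =
            ((G' c i).filter fun x => x.1 ∈ ST.1 ∧ x.2 ∈ ST.2).image (ed i) := by
          ext e
          simp only [mem_filter, mem_univ, true_and, mem_image, A, G', E]
          constructor
          · intro h
            split_ifs at h with h2
            · obtain ⟨x, hx, rfl⟩ := h2
              exact ⟨x, ⟨⟨hx.1, by simpa using h⟩, hx.2⟩, rfl⟩
            · simp at h
          · rintro ⟨x, ⟨⟨hx1, hx2⟩, hx3⟩, rfl⟩
            rw [if_pos ⟨x, ⟨hx1, hx3⟩, rfl⟩]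
            simpa using hx2
        rw [this, Finset.card_image_of_injective _ (hed i)]
        rfl)
    rw [Fintype.card_fin] at h1
    refine h1.trans (mul_le_mul_of_nonneg_left (Real.exp_le_exp.mpr (neg_le_neg ?_)) (by positivity))
    have h2 := (hcut i ST.1 ST.2 hST').1
    have h3 : κ * (min ST.1.card ST.2.card : ℕ) =
      η ^ 2 * ((D * (min ST.1.card ST.2.card : ℕ) / 8) / M) / 4 := by rw [hκ]; field_simp; ring
    rw [h3]
    gcongr
  have hgood : ∃ c : β → Fin M, ∀ i, ∀ ST ∈ Q, c ∉ Bad i ST := by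
    by_contra hcon
    push Not at hcon
    have hcov : (univ : Finset (β → Fin M)) ⊆ univ.biUnion fun i => Q.biUnion fun ST => Bad i ST := by
      intro c _
      obtain ⟨i, ST, h1, h2⟩ := hcon c
      simp only [mem_biUnion, mem_univ, true_and]
      exact ⟨i, ST, h1, h2⟩
    have h1 := Finset.card_le_card hcov
    rw [card_univ, Fintype.card_fun, Fintype.card_fin] at h1
    have hpos : (0:ℝ) < (M : ℝ) ^ Fintype.card β := by positivity
    have h2 : (M : ℝ) ^ Fintype.card β ≤ ∑ i : Fin R, ∑ ST ∈ Q, ((Bad i ST).card : ℝ) := by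
      have := h1.trans (Finset.card_biUnion_le.trans
        (Finset.sum_le_sum fun i _ => Finset.card_biUnion_le))
      exact_mod_cast this
    rcases Nat.eq_zero_or_pos R with hR | hR
    · subst hR
      simp at h2
      linarith
    have hR' : (1:ℝ) ≤ R := by exact_mod_cast hR
    have hν0 : 0 ≤ (ν : ℝ) * Real.exp (-(κ / 2)) := by positivity
    have h3 := cut_sum ν κ hκ0 (by nlinarith)
    have h4 : ∀ i : Fin R, ∑ ST ∈ Q, ((Bad i ST).card : ℝ) ≤
        (M : ℝ) ^ Fintype.card β * (12 * (ν * Real.exp (-(κ / 2)))) := by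
      intro i
      refine (Finset.sum_le_sum (hbad i)).trans ?_
      rw [← Finset.mul_sum]
      exact mul_le_mul_of_nonneg_left h3 hpos.le
    have h5 := h2.trans (Finset.sum_le_sum fun i _ => h4 i)
    rw [sum_const, card_univ, Fintype.card_fin, nsmul_eq_mul] at h5
    have := mul_lt_mul_of_pos_left hsmall hpos
    nlinarith
  obtain ⟨c, hc⟩ := hgood
  have hcutok : ∀ i, CutOK r (G' c i) := by
    intro i S T
    by_cases hST : ν < S.card + T.card
    · have h1 := hc i (S, T) (by simp [hQ, hST])
      have h2 : (1 - η) * (eb (G i) S T / M) ≤ (eb (G' c i) S T : ℝ) := by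
        by_contra h
        apply h1
        simp only [hBad, mem_filter, mem_univ, true_and]
        exact ⟨(not_le.mp h).le, h⟩
      have h3 := (hcut i S T hST).2
      have hpos : (0:ℝ) ≤ (S.card : ℝ) + T.card - ν := by
        have : (ν:ℝ) < S.card + T.card := by exact_mod_cast hST
        linarith
      have h4 : (r : ℝ) * ((S.card : ℝ) + T.card - ν) ≤ (eb (G' c i) S T : ℝ) := by
        refine le_trans ?_ h2
        calc (r : ℝ) * ((S.card : ℝ) + T.card - ν) ≤ (1 - η) * L / M * ((S.card : ℝ) + T.card - ν) :=
              mul_le_mul_of_nonneg_right hr hpos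
          _ = (1 - η) * (L * ((S.card : ℝ) + T.card - ν) / M) := by ring
          _ ≤ _ := by
            refine mul_le_mul_of_nonneg_left ?_ (by linarith)
            gcongr
      exact_mod_cast h4
    · have : (S.card : ℤ) + T.card - ν ≤ 0 := by omega
      have h1 : (r : ℤ) * ((S.card : ℤ) + T.card - ν) ≤ 0 :=
        mul_nonpos_of_nonneg_of_nonpos (by positivity) this
      have h2 : (0 : ℤ) ≤ eb (G' c i) S T := by positivity
      linarith
  choose π hπ1 hπ2 using fun i => cut_perms r (G' c i) (hcutok i)
  refine ⟨π, fun i j a => (mem_filter.mp (hπ1 i j a)).1, ?_⟩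
  intro i j i' j' hne a a' heq
  have h1 := mem_filter.mp (hπ1 i j a)
  have h2 := mem_filter.mp (hπ1 i' j' a')
  have hii : i = i' := by
    refine hlab (ed i (a, π i j a)) i ?_ i' ?_ ?_
    · simp only [mem_filter, mem_univ, true_and]; exact ⟨_, h1.1, rfl⟩
    · simp only [mem_filter, mem_univ, true_and]; exact ⟨_, h2.1, heq.symm⟩
    · rw [← h1.2]
      have := h2.2
      rw [← heq] at this
      exact this
  subst hii
  have h3 := hed i heq
  simp only [Prod.mk.injEq] at h3
  obtain ⟨rfl, h4⟩ := h3
  have hjj : j ≠ j' := fun h => hne (by rw [h])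
  exact hπ2 i j j' hjj a h4

end PM


namespace PM

/-- rows of the first part -/
def IX (k : ℕ) : Finset (Fin k) := univ.filter fun i => i.val < k / 2

/-- rows of the second part -/
def IY (k : ℕ) : Finset (Fin k) := univ.filter fun i => ¬ i.val < k / 2

lemma card_IX (k : ℕ) (hk : 2 ≤ k) : (IX k).card = k / 2 := by
  have h : IX k = Finset.Iio (⟨k / 2, by omega⟩ : Fin k) := by
    ext i; simp [IX, Fin.lt_def]
  rw [h, Fin.card_Iio]

lemma card_IY (k : ℕ) (hk : 2 ≤ k) : (IY k).card = k - k / 2 := by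
  have h := Finset.card_filter_add_card_filter_not (s := (univ : Finset (Fin k)))
    (p := fun i : Fin k => i.val < k / 2)
  have h2 := card_IX k hk
  unfold IX at h2
  unfold IY
  simp only [card_univ, Fintype.card_fin] at h
  omega

lemma blk_disj {k ν : ℕ} (a b : Fin ν) : Disjoint (blk (IX k) a) (blk (IY k) b) := by
  rw [Finset.disjoint_left]
  intro x hx hy
  rw [mem_blk] at hx hy
  have h1 := hx.1
  have h2 := hy.1
  simp only [IX, IY, mem_filter, mem_univ, true_and] at h1 h2
  exact h2 h1

lemma blk_disj_ne {k ν : ℕ} (I J : Finset (Fin k)) {a b : Fin ν} (h : a ≠ b) :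
    Disjoint (blk I a) (blk J b) := by
  rw [Finset.disjoint_left]
  intro x hx hy
  rw [mem_blk] at hx hy
  exact h (hx.2.symm.trans hy.2)

/-- the edge of the grid -/
def gr {k ν : ℕ} (x : Fin ν × Fin ν) : Finset (Fin (k * ν)) := blk (IX k) x.1 ∪ blk (IY k) x.2

/-- the edge after a permutation -/
def ed {k ν : ℕ} (σ : Equiv.Perm (Fin (k * ν))) (x : Fin ν × Fin ν) : Finset (Fin (k * ν)) :=
  (gr x).image σ

lemma gr_card {k ν : ℕ} (hk : 2 ≤ k) (x : Fin ν × Fin ν) : (gr (k := k) x).card = k := by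
  unfold gr
  rw [Finset.card_union_of_disjoint (blk_disj _ _), card_blk, card_blk, card_IX k hk, card_IY k hk]
  omega

lemma gr_inj {k ν : ℕ} (hk : 2 ≤ k) : Function.Injective (gr (k := k) (ν := ν)) := by
  intro x y h
  have hX : (IX k).Nonempty := by rw [← Finset.card_pos, card_IX k hk]; omega
  have hY : (IY k).Nonempty := by rw [← Finset.card_pos, card_IY k hk]; omega
  obtain ⟨i, hi⟩ := hX
  obtain ⟨j, hj⟩ := hY
  have hi' : i ∉ IY k := by simp only [IX, IY, mem_filter, mem_univ, true_and] at hi ⊢; omega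
  have hj' : j ∉ IX k := by simp only [IX, IY, mem_filter, mem_univ, true_and] at hj ⊢; omega
  have h1 : finProdFinEquiv (i, x.1) ∈ gr (k := k) y := by
    rw [← h]; unfold gr
    rw [mem_union, mem_blk]; left; simpa using hi
  have h2 : finProdFinEquiv (j, x.2) ∈ gr (k := k) y := by
    rw [← h]; unfold gr
    rw [mem_union, mem_blk, mem_blk]; right; simpa using hj
  unfold gr at h1 h2
  rw [mem_union, mem_blk, mem_blk] at h1 h2
  simp only [Equiv.symm_apply_apply] at h1 h2
  refine Prod.ext ?_ ?_
  · rcases h1 with h1 | h1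
    · exact h1.2
    · exact absurd h1.1 hi'
  · rcases h2 with h2 | h2
    · exact absurd h2.1 hj'
    · exact h2.2

lemma ed_inj {k ν : ℕ} (hk : 2 ≤ k) (σ : Equiv.Perm (Fin (k * ν))) :
    Function.Injective (ed (k := k) (ν := ν) σ) :=
  (Finset.image_injective σ.injective).comp (gr_inj hk)

lemma ed_card {k ν : ℕ} (hk : 2 ≤ k) (σ : Equiv.Perm (Fin (k * ν))) (x : Fin ν × Fin ν) :
    (ed σ x).card = k := by
  unfold ed; rw [card_img, gr_card hk]

/-- bipartite graph of a permutation -/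
def Gs {k ν : ℕ} (H : Finset (Finset (Fin (k * ν)))) (σ : Equiv.Perm (Fin (k * ν))) :
    Finset (Fin ν × Fin ν) := univ.filter fun x => ed σ x ∈ H

lemma mem_Gs {k ν : ℕ} (H : Finset (Finset (Fin (k * ν)))) (σ : Equiv.Perm (Fin (k * ν)))
    (x : Fin ν × Fin ν) : x ∈ Gs H σ ↔ ed σ x ∈ H := by simp [Gs]

lemma Gs_X {k ν : ℕ} (hk : 2 ≤ k) (H : Finset (Finset (Fin (k * ν)))) (σ : Equiv.Perm (Fin (k * ν)))
    (a b : Fin ν) : (blk (IY k) b).image σ ∈ hNbhd (k * ν) k H ((blk (IX k) a).image σ)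
      ↔ (a, b) ∈ Gs H σ := by
  unfold hNbhd
  rw [mem_Gs, mem_filter, card_img, card_img, card_blk, card_blk, card_IX k hk, card_IY k hk]
  simp only [mem_univ, true_and, ed, gr, Finset.image_union]

lemma Gs_Y {k ν : ℕ} (hk : 2 ≤ k) (H : Finset (Finset (Fin (k * ν)))) (σ : Equiv.Perm (Fin (k * ν)))
    (a b : Fin ν) : (blk (IX k) a).image σ ∈ hNbhd (k * ν) k H ((blk (IY k) b).image σ)
      ↔ (a, b) ∈ Gs H σ := by
  unfold hNbhd
  rw [mem_Gs, mem_filter, card_img, card_img, card_blk, card_blk, card_IX k hk, card_IY k hk]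
  simp only [mem_univ, true_and, ed, gr, Finset.image_union]
  rw [Finset.union_comm]
  constructor
  · exact fun h => h.2
  · exact fun h => ⟨by omega, h⟩

lemma eb_row {ν : ℕ} (G : Finset (Fin ν × Fin ν)) (a : Fin ν) :
    eb G {a} univ = (univ.filter fun b => (a, b) ∈ G).card := by
  rw [eb_single, Finset.card_filter]

lemma eb_col {ν : ℕ} (G : Finset (Fin ν × Fin ν)) (b : Fin ν) :
    eb G univ {b} = (univ.filter fun a => (a, b) ∈ G).card := by
  unfold eb
  refine Finset.card_bij' (fun x _ => x.1) (fun a _ => (a, b)) ?_ ?_ ?_ ?_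
  · rintro ⟨x, y⟩ hx
    simp only [mem_filter, mem_univ, true_and, mem_singleton] at hx ⊢
    obtain ⟨h1, rfl⟩ := hx; exact h1
  · intro x hx
    simp only [mem_filter, mem_univ, true_and, mem_singleton] at hx ⊢
    exact ⟨hx, trivial⟩
  · rintro ⟨x, y⟩ hx
    simp only [mem_filter, mem_univ, true_and, mem_singleton] at hx ⊢
    rw [hx.2]
  · intro x hx; rfl

lemma good_cut {k ν : ℕ} (hk : 2 ≤ k) (hν : 0 < ν) (H : Finset (Finset (Fin (k * ν)))) (p ε : ℝ)
    (hp : 0 < p) (hε0 : 0 < ε) (hε : ε ≤ 1 / 60) (hsq : Real.sqrt ν ≤ ε * (ν * p))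
    (σ : Equiv.Perm (Fin (k * ν))) (h1 : GoodK H p ε (k / 2) (IY k) σ)
    (h2 : GoodK H p ε (k - k / 2) (IX k) σ)
    (S T : Finset (Fin ν)) (hST : ν < S.card + T.card) :
    (ν * p) * (min S.card T.card : ℕ) / 8 ≤ (eb (Gs H σ) S T : ℝ) ∧
    (1 - 10 * ε) * (ν * p) * ((S.card : ℝ) + T.card - ν) ≤ (eb (Gs H σ) S T : ℝ) := by
  have cX : ∀ a : Fin ν, ((blk (IX k) a).image σ).card = k / 2 := fun a => by
    rw [card_img, card_blk, card_IX k hk]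
  have cY : ∀ a : Fin ν, ((blk (IY k) a).image σ).card = k - k / 2 := fun a => by
    rw [card_img, card_blk, card_IY k hk]
  refine pr_cut_both hν (Gs H σ) p ε hp hε0 hε ?_ ?_ ?_ ?_ hsq S T hST
  · intro a
    have h := h1.1 _ (cX a)
    rw [eb_row]
    unfold Zc at h
    simpa only [Gs_X hk] using h
  · intro b
    have h := h2.1 _ (cY b)
    rw [eb_col]
    unfold Zc at h
    simpa only [Gs_Y hk] using h
  · intro b b' hb
    have h := h2.2 _ _ (cY b) (cY b')
      ((Finset.disjoint_image σ.injective).mpr (blk_disj_ne _ _ hb))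
    unfold Zc at h
    simpa only [mem_inter, Gs_Y hk] using h
  · intro b b' hb
    have h := h1.2 _ _ (cX b) (cX b')
      ((Finset.disjoint_image σ.injective).mpr (blk_disj_ne _ _ hb))
    unfold Zc at h
    simpa only [mem_inter, Gs_X hk] using h

open scoped Classical in
lemma choose_perms {k ν R M : ℕ} (hk : 2 ≤ k) (hν : 0 < ν) (H : Finset (Finset (Fin (k * ν))))
    (huni : ∀ e ∈ H, e.card = k)
    (Good : Equiv.Perm (Fin (k * ν)) → Prop) (ε η : ℝ) (hε : ε < 1)
    (hη0 : 0 ≤ η) (hη1 : η ≤ 1)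
    (hgood : (1 - ε) * ((k * ν).factorial : ℝ) ≤ ((univ.filter Good).card : ℝ))
    (hR : (R : ℝ) * (ν ^ 2 / ((k * ν).choose k : ℝ)) ≤ (1 - η) * (1 - ε) * M)
    (hsmall : (H.card : ℝ) * Real.exp (-(η ^ 2 * M / 4)) < 1) :
    ∃ f : Fin R → Equiv.Perm (Fin (k * ν)), (∀ i, Good (f i)) ∧
      ∀ e, (univ.filter fun i => ∃ x ∈ Gs H (f i), ed (f i) x = e).card ≤ M := by
  have hfac : (0:ℝ) < ((k * ν).factorial : ℝ) := by exact_mod_cast Nat.factorial_pos _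
  have hcho : (0:ℝ) < ((k * ν).choose k : ℝ) := by
    exact_mod_cast Nat.choose_pos (Nat.le_mul_of_pos_right k hν)
  have hgpos : (0:ℝ) < ((univ.filter Good).card : ℝ) :=
    lt_of_lt_of_le (mul_pos (by linarith) hfac) hgood
  let α := {σ // Good σ}
  have hα : Fintype.card α = (univ.filter Good).card := Fintype.card_subtype _
  have hne : Nonempty α := by
    rw [← Fintype.card_pos_iff, hα]; exact_mod_cast hgpos
  have hA : ∀ e ∈ H, ((univ.filter fun g : α => ∃ x, ed g.1 x = e).card : ℝ) ≤
      ν ^ 2 * ((k * ν).factorial / (k * ν).choose k) := by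
    intro e he
    have h1 : (univ.filter fun g : α => ∃ x, ed g.1 x = e).card ≤
        (univ.biUnion fun x : Fin ν × Fin ν =>
          univ.filter fun σ : Equiv.Perm (Fin (k * ν)) => (gr x).image σ = e).card := by
      refine Finset.card_le_card_of_injOn (fun g => g.1) ?_ (Subtype.val_injective.injOn)
      intro g hg
      simp only [coe_filter, mem_univ, true_and, Set.mem_ofPred_eq] at hg
      obtain ⟨x, hx⟩ := hg
      simp only [coe_biUnion, Set.mem_iUnion, coe_filter, mem_univ, true_and, Set.mem_ofPred_eq]
      exact ⟨x, mem_coe.mpr (mem_univ x), hx⟩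
    have h2 : ((univ.filter fun g : α => ∃ x, ed g.1 x = e).card : ℝ) ≤
      ∑ x : Fin ν × Fin ν, ((univ.filter fun σ : Equiv.Perm (Fin (k * ν)) =>
          (gr x).image σ = e).card : ℝ) := by
      exact_mod_cast h1.trans Finset.card_biUnion_le
    refine h2.trans (le_of_eq ?_)
    have h3 : ∀ x : Fin ν × Fin ν, ((univ.filter fun σ : Equiv.Perm (Fin (k * ν)) =>
          (gr x).image σ = e).card : ℝ) = (k * ν).factorial / (k * ν).choose k := by
      intro x
      have := count_image_real (gr x) e (by rw [gr_card hk, huni e he])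
      rwa [gr_card hk] at this
    simp_rw [h3]
    rw [sum_const, card_univ, Fintype.card_prod, Fintype.card_fin, nsmul_eq_mul]
    push_cast; ring
  have hbad : ∀ e ∈ H, ((univ.filter fun f : Fin R → α =>
      (M : ℝ) ≤ ((univ.filter fun i => ∃ x, ed (f i).1 x = e).card : ℝ)).card : ℝ) ≤
      (Fintype.card α : ℝ) ^ R * Real.exp (-(η ^ 2 * M / 4)) := by
    intro e he
    have := chernoff_upper (ι := Fin R) (α := α) (fun _ => univ.filter fun g : α => ∃ x, ed g.1 x = e)
      M η hη0 hη1 (by positivity) (by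
        rw [sum_const, card_univ, Fintype.card_fin, nsmul_eq_mul, hα, div_le_iff₀ hgpos]
        have h1 := mul_le_mul_of_nonneg_left (hA e he) (show (0:ℝ) ≤ R by positivity)
        have h2 := mul_le_mul_of_nonneg_right hR hfac.le
        have h3 := mul_le_mul_of_nonneg_left hgood
          (show 0 ≤ (1 - η) * (M : ℝ) from mul_nonneg (by linarith) (by positivity))
        have e1 : (R : ℝ) * (ν ^ 2 * ((k * ν).factorial / (k * ν).choose k)) =
          (R : ℝ) * (ν ^ 2 / ((k * ν).choose k : ℝ)) * (k * ν).factorial := by ring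
        linarith)
      (fun f : Fin R → α => (M : ℝ) ≤ ((univ.filter fun i => ∃ x, ed (f i).1 x = e).card : ℝ)) (by
        intro f hf
        simpa using hf)
    rwa [Fintype.card_fin] at this
  have hex : ∃ f : Fin R → α, ∀ e ∈ H,
      ¬ (M : ℝ) ≤ ((univ.filter fun i => ∃ x, ed (f i).1 x = e).card : ℝ) := by
    by_contra hcon
    push Not at hcon
    have hcov : (univ : Finset (Fin R → α)) ⊆ H.biUnion fun e => univ.filter fun f : Fin R → α =>
      (M : ℝ) ≤ ((univ.filter fun i => ∃ x, ed (f i).1 x = e).card : ℝ) := by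
      intro f _
      obtain ⟨e, he, h⟩ := hcon f
      simp only [mem_biUnion, mem_filter, mem_univ, true_and]
      exact ⟨e, he, h⟩
    have h1 := Finset.card_le_card hcov
    rw [card_univ, Fintype.card_fun, Fintype.card_fin] at h1
    have h2 : (Fintype.card α : ℝ) ^ R ≤ ∑ e ∈ H, ((univ.filter fun f : Fin R → α =>
      (M : ℝ) ≤ ((univ.filter fun i => ∃ x, ed (f i).1 x = e).card : ℝ)).card : ℝ) := by
      exact_mod_cast h1.trans Finset.card_biUnion_le
    have h3 := h2.trans (Finset.sum_le_sum hbad)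
    rw [sum_const, nsmul_eq_mul] at h3
    have hpos : (0:ℝ) < (Fintype.card α : ℝ) ^ R := by
      rw [hα]; positivity
    have := mul_lt_mul_of_pos_left hsmall hpos
    nlinarith
  obtain ⟨f, hf⟩ := hex
  refine ⟨fun i => (f i).1, fun i => (f i).2, fun e => ?_⟩
  by_cases he : e ∈ H
  · have h1 := hf e he
    rw [not_le] at h1
    have h2 : (univ.filter fun i => ∃ x, ed (f i).1 x = e).card < M := by exact_mod_cast h1
    refine le_trans (Finset.card_le_card ?_) h2.le
    intro i hi
    simp only [mem_filter, mem_univ, true_and] at hi ⊢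
    obtain ⟨x, _, hx⟩ := hi
    exact ⟨x, hx⟩
  · rw [Finset.card_eq_zero.mpr]
    · exact Nat.zero_le _
    · rw [Finset.filter_eq_empty_iff]
      rintro i _ ⟨x, hx, rfl⟩
      exact he ((mem_Gs _ _ _).mp hx)

/-- the matching given by a permutation pair -/
def mat {k ν : ℕ} (σ : Equiv.Perm (Fin (k * ν))) (π : Equiv.Perm (Fin ν)) :
    Finset (Finset (Fin (k * ν))) := univ.image fun a => ed σ (a, π a)

lemma gr_disj {k ν : ℕ} (π : Equiv.Perm (Fin ν)) {a b : Fin ν} (h : a ≠ b) :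
    Disjoint (gr (k := k) (a, π a)) (gr (b, π b)) := by
  unfold gr
  rw [Finset.disjoint_union_left, Finset.disjoint_union_right, Finset.disjoint_union_right]
  exact ⟨⟨blk_disj_ne _ _ h, blk_disj _ _⟩, ⟨(blk_disj _ _).symm,
    blk_disj_ne _ _ fun h' => h (π.injective h')⟩⟩

lemma mat_pm {k ν : ℕ} (hk : 2 ≤ k) (H : Finset (Finset (Fin (k * ν))))
    (σ : Equiv.Perm (Fin (k * ν))) (π : Equiv.Perm (Fin ν)) (h : ∀ a, (a, π a) ∈ Gs H σ) :
    IsHypPerfectMatching (k * ν) k H (mat σ π) := by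
  have hcard : (mat σ π).card = ν := by
    unfold mat
    rw [Finset.card_image_of_injective, card_univ, Fintype.card_fin]
    intro a b hab
    exact congrArg Prod.fst (ed_inj hk σ hab)
  refine ⟨?_, ?_, ?_, ?_⟩
  · intro e he
    obtain ⟨a, _, rfl⟩ := Finset.mem_image.mp he
    exact (mem_Gs _ _ _).mp (h a)
  · rw [hcard, Nat.mul_div_cancel_left _ (by omega)]
  · intro e he e' he' hne
    obtain ⟨a, _, rfl⟩ := Finset.mem_image.mp (mem_coe.mp he)
    obtain ⟨b, _, rfl⟩ := Finset.mem_image.mp (mem_coe.mp he')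
    have hab : a ≠ b := by rintro rfl; exact hne rfl
    exact (Finset.disjoint_image σ.injective).mpr (gr_disj π hab)
  · rw [Finset.eq_univ_iff_forall]
    intro y
    set x := σ.symm y with hx
    have hy : y = σ x := by simp [hx]
    rw [mem_biUnion]
    set i := (finProdFinEquiv.symm x).1
    set c := (finProdFinEquiv.symm x).2 with hc
    by_cases hi : i.val < k / 2
    · refine ⟨ed σ (c, π c), Finset.mem_image_of_mem _ (mem_univ _), ?_⟩
      rw [hy]
      refine Finset.mem_image_of_mem _ ?_
      unfold gr
      rw [mem_union, mem_blk]
      left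
      exact ⟨by simp only [IX, mem_filter, mem_univ, true_and]; exact hi, rfl⟩
    · refine ⟨ed σ (π.symm c, π (π.symm c)), Finset.mem_image_of_mem _ (mem_univ _), ?_⟩
      rw [hy]
      refine Finset.mem_image_of_mem _ ?_
      unfold gr
      rw [mem_union, mem_blk, mem_blk]
      right
      exact ⟨by simp only [IY, mem_filter, mem_univ, true_and]; exact hi, by simp [hc]⟩

open scoped Classical in
lemma finite_main {k ν R M r : ℕ} (hk : 2 ≤ k) (hν : 0 < ν) (H : Finset (Finset (Fin (k * ν))))
    (huni : ∀ e ∈ H, e.card = k) (p ε η : ℝ)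
    (hp0 : 0 < p) (hp1 : p ≤ 1) (hε0 : 0 < ε) (hε : ε ≤ 1 / 60)
    (hRa : ∀ S : Finset (Fin (k * ν)), S.card = k / 2 →
      Nat.ceil ((1 - ε) * (((k * ν - k / 2).choose (k - k / 2) : ℕ) : ℝ) * p)
        ≤ hDeg (k * ν) k H S)
    (hRb : ∀ S : Finset (Fin (k * ν)), S.card = k - k / 2 →
      Nat.ceil ((1 - ε) * (((k * ν - (k - k / 2)).choose (k / 2) : ℕ) : ℝ) * p)
        ≤ hDeg (k * ν) k H S)
    (hRe : ∀ S₁ S₂ : Finset (Fin (k * ν)),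
      S₁.card = k / 2 → S₂.card = k / 2 → Disjoint S₁ S₂ →
      (hNbhd (k * ν) k H S₁ ∩ hNbhd (k * ν) k H S₂).card
        ≤ Nat.floor ((1 + ε) * (((k * ν - 2 * (k / 2)).choose (k - k / 2) : ℕ) : ℝ) * p ^ 2))
    (hRf : ∀ S₁ S₂ : Finset (Fin (k * ν)),
      S₁.card = k - k / 2 → S₂.card = k - k / 2 → Disjoint S₁ S₂ →
      (hNbhd (k * ν) k H S₁ ∩ hNbhd (k * ν) k H S₂).card
        ≤ Nat.floor ((1 + ε) * (((k * ν - 2 * (k - k / 2)).choose (k / 2) : ℕ) : ℝ) * p ^ 2))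
    (hη0 : 0 ≤ η) (hη1 : η ≤ 1) (hM : 0 < M)
    (C1 : (k : ℝ) / ν ≤ ε) (C2 : Real.sqrt ν ≤ ε * (ν * p))
    (C3 : 4 * ((k * ν : ℕ) : ℝ) ^ (2 * k) * Real.exp (-(ε ^ 2 * ν * p ^ 4 / (32 * k))) ≤ ε)
    (C4 : (H.card : ℝ) * Real.exp (-(η ^ 2 * M / 4)) < 1)
    (C5 : (R : ℝ) * (ν ^ 2 / ((k * ν).choose k : ℝ)) ≤ (1 - η) * (1 - ε) * M)
    (C6 : R * (12 * (ν * Real.exp (-(η ^ 2 * (ν * p) / (64 * M))))) < 1)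
    (C7 : (r : ℝ) ≤ (1 - η) * ((1 - 10 * ε) * (ν * p)) / M) :
    ∃ 𝒮 : Finset (Finset (Finset (Fin (k * ν)))), 𝒮.card = R * r ∧
        (∀ C ∈ 𝒮, IsHypPerfectMatching (k * ν) k H C) ∧
        (𝒮 : Set (Finset (Finset (Fin (k * ν))))).Pairwise Disjoint := by
  have hkk : k - (k - k / 2) = k / 2 := by omega
  have hb1 := bad_count (by omega) hν H p ε hp0 hp1 hε0 (by linarith) C1 (k / 2) (by omega) (IY k)
    (card_IY k hk) (fun S hS => (Nat.le_ceil _).trans (Nat.cast_le.mpr (hRa S hS)))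
    (fun S₁ S₂ h1 h2 h3 => (Nat.cast_le.mpr (hRe S₁ S₂ h1 h2 h3)).trans
      (Nat.floor_le (by positivity)))
  have hb2 := bad_count (by omega) hν H p ε hp0 hp1 hε0 (by linarith) C1 (k - k / 2) (by omega) (IX k)
    (by rw [card_IX k hk, hkk])
    (fun S hS => by rw [hkk]; exact (Nat.le_ceil _).trans (Nat.cast_le.mpr (hRb S hS)))
    (fun S₁ S₂ h1 h2 h3 => by
      rw [hkk]
      exact (Nat.cast_le.mpr (hRf S₁ S₂ h1 h2 h3)).trans (Nat.floor_le (by positivity)))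
  set Good : Equiv.Perm (Fin (k * ν)) → Prop := fun σ =>
    GoodK H p ε (k / 2) (IY k) σ ∧ GoodK H p ε (k - k / 2) (IX k) σ with hGood
  have hgood : (1 - ε) * ((k * ν).factorial : ℝ) ≤ ((univ.filter Good).card : ℝ) := by
    have h1 := Finset.card_filter_add_card_filter_not (s := (univ : Finset (Equiv.Perm (Fin (k * ν)))))
      (p := Good)
    rw [card_univ, Fintype.card_perm, Fintype.card_fin] at h1
    have h2 : (univ.filter fun σ => ¬ Good σ) ⊆
      (univ.filter fun σ => ¬ GoodK H p ε (k / 2) (IY k) σ) ∪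
      (univ.filter fun σ => ¬ GoodK H p ε (k - k / 2) (IX k) σ) := by
      intro σ hσ
      simp only [hGood, mem_filter, mem_univ, true_and, mem_union, not_and_or] at hσ ⊢
      exact hσ
    have h3 := (Finset.card_le_card h2).trans (Finset.card_union_le _ _)
    have h3' : ((univ.filter fun σ => ¬ Good σ).card : ℝ) ≤
      ((univ.filter fun σ => ¬ GoodK H p ε (k / 2) (IY k) σ).card : ℝ) +
      ((univ.filter fun σ => ¬ GoodK H p ε (k - k / 2) (IX k) σ).card : ℝ) := by exact_mod_cast h3
    have h1' : ((univ.filter Good).card : ℝ) + ((univ.filter fun σ => ¬ Good σ).card : ℝ)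
      = (k * ν).factorial := by exact_mod_cast h1
    have h4 := mul_le_mul_of_nonneg_left C3 (show (0:ℝ) ≤ (k * ν).factorial by positivity)
    linarith
  obtain ⟨f, hf1, hf2⟩ := choose_perms hk hν H huni Good ε η (by linarith) hη0 hη1 (by convert hgood) C5 C4
  obtain ⟨π, hπ1, hπ2⟩ := split_perms (r := r) hM (fun i => ed (f i)) (fun i => ed_inj hk (f i))
    (fun i => Gs H (f i)) hf2 (ν * p) ((1 - 10 * ε) * (ν * p)) η (by positivity) hη0 hη1
    (fun i S T hST => good_cut hk hν H p ε hp0 hε0 hε C2 (f i) (hf1 i).1 (hf1 i).2 S T hST) C6 C7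
  have hdisj : ∀ q q' : Fin R × Fin r, q ≠ q' →
      Disjoint (mat (f q.1) (π q.1 q.2)) (mat (f q'.1) (π q'.1 q'.2)) := by
    intro q q' hne
    rw [Finset.disjoint_left]
    intro e he he'
    obtain ⟨a, _, rfl⟩ := Finset.mem_image.mp he
    obtain ⟨a', _, h⟩ := Finset.mem_image.mp he'
    exact hπ2 q.1 q.2 q'.1 q'.2 hne a a' h.symm
  refine ⟨univ.image fun q : Fin R × Fin r => mat (f q.1) (π q.1 q.2), ?_, ?_, ?_⟩
  · rw [Finset.card_image_of_injective, card_univ, Fintype.card_prod, Fintype.card_fin, Fintype.card_fin]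
    intro q q' h
    by_contra hne
    have h1 := hdisj q q' hne
    simp only at h
    rw [h, Finset.disjoint_self_iff_empty] at h1
    have : ed (f q'.1) (⟨0, hν⟩, π q'.1 q'.2 ⟨0, hν⟩) ∈ mat (f q'.1) (π q'.1 q'.2) :=
      Finset.mem_image_of_mem _ (mem_univ _)
    rw [h1] at this
    simp at this
  · intro C hC
    obtain ⟨q, _, rfl⟩ := Finset.mem_image.mp hC
    exact mat_pm hk H _ _ fun a => hπ1 q.1 q.2 a
  · intro C hC C' hC' hne
    obtain ⟨q, _, rfl⟩ := Finset.mem_image.mp (mem_coe.mp hC)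
    obtain ⟨q', _, rfl⟩ := Finset.mem_image.mp (mem_coe.mp hC')
    exact hdisj q q' (by rintro rfl; exact hne rfl)

end PM


namespace PM

lemma alg1 (η x : ℝ) (h0 : 0 < η) (h1 : η ≤ 1 / 10) (h : 6 ≤ x * η) :
    1 ≤ (1 - η) * (x * η / 3) := by nlinarith

lemma alg2 (η ε : ℝ) (h0 : 0 < η) (h1 : η ≤ 1 / 10) (he : 0 < ε) (h : ε ≤ η / 100) :
    (1 - 4 * η) ≤ (1 - η) * (1 - ε - η / 3) * ((1 - η) * (1 - 10 * ε - η / 3)) := by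
  have a1 : 1 - η - ε - η / 3 ≤ (1 - η) * (1 - ε - η / 3) := by nlinarith
  have a2 : 1 - η - 10 * ε - η / 3 ≤ (1 - η) * (1 - 10 * ε - η / 3) := by nlinarith
  have a3 := mul_le_mul a1 a2 (by linarith) (by linarith)
  refine le_trans ?_ a3
  have : 0 ≤ (4 / 3 * η + ε) * (4 / 3 * η + 10 * ε) := by positivity
  nlinarith

lemma alg3 (η d M l k : ℝ) (hη : 0 < η) (h1 : η ≤ 1 / 10) (hd : 0 < d) (hM : 0 < M) (hl : 1 ≤ l)
    (hk : 2 ≤ k) (hdM : 64 * M ≤ η ^ 2 * d) (hM1 : 4 * (k + 1) * l ≤ M * η ^ 2) :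
    M ≤ d ∧ 6 * M ≤ η * d ∧ 6 ≤ M * η := by
  have h2 : η ^ 2 ≤ η := by nlinarith
  have h3 := mul_le_mul_of_nonneg_right h2 hd.le
  have h4 : η * d ≤ 1 * d := mul_le_mul_of_nonneg_right (by linarith) hd.le
  have h5 := mul_le_mul_of_nonneg_left h2 hM.le
  have h6 : 12 ≤ 4 * (k + 1) * l := by nlinarith
  exact ⟨by linarith, by linarith, by linarith⟩

lemma alg4 (k : ℝ) (hk : 2 ≤ k) : 320 * (k + 4) * (k + 1) ≤ 10 ^ 4 * k ^ 4 ∧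
    (2 * k + 2) * (32 * k) ≤ 10 ^ 4 * k ^ 4 := by
  have h1 : k ^ 2 ≤ k ^ 4 := pow_le_pow_right₀ (by linarith) (by norm_num)
  constructor <;> nlinarith

set_option maxHeartbeats 1600000 in
lemma numeric (k ν : ℕ) (hk : 2 ≤ k) (hν : 0 < ν) (C m p ε η l : ℝ) (hη : 0 < η) (hη1 : η ≤ 1 / 10)
    (hε : ε = η ^ 3) (hp : 0 < p) (hp1 : p ≤ 1) (hl : l = Real.log ((k * ν : ℕ) : ℝ))
    (hbig : 10 ^ 4 * (k : ℝ) ^ 4 ≤ l)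
    (hmain : l ^ 5 ≤ ε * Real.sqrt ((k * ν : ℕ) : ℝ) * p ^ 2)
    (hC1 : (ν : ℝ) ^ 2 ≤ C) (hC2 : C ≤ ((k * ν : ℕ) : ℝ) ^ k) (hm : m = p * C) :
    (k : ℝ) / ν ≤ ε ∧ Real.sqrt ν ≤ ε * (ν * p) ∧
    4 * ((k * ν : ℕ) : ℝ) ^ (2 * k) * Real.exp (-(ε ^ 2 * ν * p ^ 4 / (32 * k))) ≤ ε ∧
    ∃ M R r : ℕ, 0 < M ∧ m * Real.exp (-(η ^ 2 * M / 4)) < 1 ∧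
      (R : ℝ) * (ν ^ 2 / C) ≤ (1 - η) * (1 - ε) * M ∧
      R * (12 * (ν * Real.exp (-(η ^ 2 * (ν * p) / (64 * M))))) < 1 ∧
      (r : ℝ) ≤ (1 - η) * ((1 - 10 * ε) * (ν * p)) / M ∧
      (1 - 4 * η) * m / ν ≤ R * r := by
  have hk2 : (2:ℝ) ≤ k := by exact_mod_cast hk
  have hk0 : (0:ℝ) < k := by linarith
  have hν1 : (1:ℝ) ≤ ν := by exact_mod_cast hν
  have hν0 : (0:ℝ) < ν := by linarith
  have hε0 : 0 < ε := by rw [hε]; positivity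
  have hεη : ε ≤ η / 100 := by rw [hε]; nlinarith [sq_nonneg η, mul_pos hη hη]
  have hk4 : (k:ℝ) ^ 4 ≥ 16 := by
    have := pow_le_pow_left₀ (by norm_num) hk2 4
    linarith
  have hl1 : 1 ≤ l := by linarith
  have hl0 : 0 < l := by linarith
  set n : ℝ := ((k * ν : ℕ) : ℝ) with hn
  have hnk : n = k * ν := by rw [hn]; push_cast; ring
  have hn0 : 0 < n := by rw [hnk]; positivity
  have hnexp : n = Real.exp l := by rw [hl, Real.exp_log hn0]
  have hln : l ≤ n := by rw [hnexp]; linarith [Real.add_one_le_exp l]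
  have hνn : (ν:ℝ) ≤ n := by rw [hnk]; nlinarith
  set s := Real.sqrt ν with hs
  have hs2 : s ^ 2 = ν := Real.sq_sqrt hν0.le
  have hs0 : 0 < s := Real.sqrt_pos.mpr hν0
  have hs1 : 1 ≤ s := by rw [hs]; exact Real.one_le_sqrt.mpr hν1
  have hsqn : Real.sqrt n ≤ k * s := by
    rw [Real.sqrt_le_left (by positivity)]
    rw [hnk, mul_pow, hs2]
    nlinarith
  -- the basic quantity
  set B := ε * s * p ^ 2 with hB
  have hBk : l ^ 5 ≤ k * B := by
    refine hmain.trans ?_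
    have := mul_le_mul_of_nonneg_left hsqn (show 0 ≤ ε * p ^ 2 by positivity)
    rw [hB]; linarith
  have hB0 : 0 < B := by positivity
  have hkl : (k:ℝ) ≤ l := by
    have h1 : (k:ℝ) ≤ (k:ℝ) ^ 4 := le_self_pow₀ (by linarith) (by norm_num)
    nlinarith
  have hB4 : l ^ 4 ≤ B := by
    have h1 : l * l ^ 4 ≤ l * B := by
      have := mul_le_mul_of_nonneg_right hkl hB0.le
      nlinarith
    exact le_of_mul_le_mul_left h1 hl0
  have hB1 : 1 ≤ B := (one_le_pow₀ hl1).trans hB4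
  have hkB : (k:ℝ) ≤ B := by
    have : l ≤ l ^ 4 := le_self_pow₀ hl1 (by norm_num)
    linarith
  have hp2 : p ^ 2 ≤ p := by nlinarith
  have hεs : B ≤ ε * s * p := mul_le_mul_of_nonneg_left hp2 (by positivity)
  have hεs' : B ≤ ε * s := hεs.trans (mul_le_of_le_one_right (by positivity) hp1)
  have hBsq : ε ^ 2 * ν * p ^ 4 = B ^ 2 := by rw [hB, ← hs2]; ring
  have hB2 : l ^ 8 ≤ B ^ 2 := by
    calc l ^ 8 = (l ^ 4) ^ 2 := by ring
      _ ≤ B ^ 2 := pow_le_pow_left₀ (by positivity) hB4 2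
  have hk34 : (k:ℝ) ^ 3 ≤ (k:ℝ) ^ 4 := pow_le_pow_right₀ (by linarith) (by norm_num)
  have hk24 : (k:ℝ) ^ 2 ≤ (k:ℝ) ^ 4 := pow_le_pow_right₀ (by linarith) (by norm_num)
  have hk14 : (k:ℝ) ≤ (k:ℝ) ^ 4 := le_self_pow₀ (by linarith) (by norm_num)
  have hl8 : 10 ^ 4 * (k:ℝ) ^ 4 * l ^ 2 ≤ B ^ 2 := by
    have h1 : l ^ 3 ≤ l ^ 8 := pow_le_pow_right₀ hl1 (by norm_num)
    have h2 := mul_le_mul_of_nonneg_right hbig (show 0 ≤ l ^ 2 by positivity)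
    have h3 : l * l ^ 2 = l ^ 3 := by ring
    linarith
  have hη2 : 0 < η ^ 2 := by positivity
  have hnpow : ∀ a : ℕ, n ^ a = Real.exp (a * l) := by
    intro a; rw [hnexp, ← Real.exp_nat_mul]
  refine ⟨?_, ?_, ?_, ?_⟩
  · rw [div_le_iff₀ hν0, ← hs2]
    have h1 : ε * s ≤ ε * s * s := le_mul_of_one_le_right (by positivity) hs1
    have h2 : ε * s ^ 2 = ε * s * s := by ring
    rw [h2]
    exact hkB.trans (hεs'.trans h1)
  · have h1 : s * 1 ≤ s * (ε * s * p) := mul_le_mul_of_nonneg_left (hB1.trans hεs) hs0.le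
    calc s = s * 1 := by ring
      _ ≤ s * (ε * s * p) := h1
      _ = ε * (s ^ 2 * p) := by ring
      _ = ε * (ν * p) := by rw [hs2]
  · rw [hBsq, hnpow, mul_assoc, ← Real.exp_add]
    have h1 : (2 * k + 2) * l ≤ B ^ 2 / (32 * k) := by
      rw [le_div_iff₀ (by positivity)]
      refine le_trans ?_ hl8
      have h2 : (2 * (k:ℝ) + 2) * (32 * k) ≤ 10 ^ 4 * (k:ℝ) ^ 4 := (alg4 k hk2).2
      have h3 : l ≤ l ^ 2 := le_self_pow₀ hl1 (by norm_num)
      calc (2 * (k:ℝ) + 2) * l * (32 * k) = (2 * (k:ℝ) + 2) * (32 * k) * l := by ring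
        _ ≤ 10 ^ 4 * (k:ℝ) ^ 4 * l ^ 2 := mul_le_mul h2 h3 hl0.le (by positivity)
    have h2 : Real.exp (((2 * k : ℕ) : ℝ) * l + -(B ^ 2 / (32 * k))) ≤ Real.exp (-(2 * l)) := by
      refine Real.exp_le_exp.mpr ?_
      push_cast
      linarith
    have h3 : Real.exp (-(2 * l)) = (n ^ 2)⁻¹ := by
      rw [Real.exp_neg, hnpow]; norm_num
    have hsn : s ≤ n := by
      have : s ≤ s ^ 2 := le_self_pow₀ hs1 (by norm_num)
      linarith
    have h4 : 4 * (n ^ 2)⁻¹ ≤ ε := by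
      rw [← div_eq_mul_inv, div_le_iff₀ (by positivity)]
      have h5 : 1 ≤ ε * n := hB1.trans (hεs'.trans (mul_le_mul_of_nonneg_left hsn hε0.le))
      have h6 : 4 ≤ n := by linarith
      calc (4:ℝ) ≤ 1 * n := by linarith
        _ ≤ ε * n * n := mul_le_mul_of_nonneg_right h5 hn0.le
        _ = ε * n ^ 2 := by ring
    rw [h3] at h2
    linarith
  · have hC0 : 0 < C := lt_of_lt_of_le (by positivity) hC1
    set M := ⌈4 * (k + 1) * l / η ^ 2⌉₊ with hMdef
    have hM1 : 4 * (k + 1) * l / η ^ 2 ≤ M := Nat.le_ceil _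
    have hM2 : (M : ℝ) ≤ 4 * (k + 1) * l / η ^ 2 + 1 := (Nat.ceil_lt_add_one (by positivity)).le
    have hM0' : (0:ℝ) < M := lt_of_lt_of_le (by positivity) hM1
    have hM0 : 0 < M := by exact_mod_cast hM0'
    have hM1' : 4 * (k + 1) * l ≤ M * η ^ 2 := (div_le_iff₀ hη2).mp hM1
    have hM2' : M * η ^ 2 ≤ 5 * (k + 1) * l := by
      have h1 := mul_le_mul_of_nonneg_right hM2 hη2.le
      rw [add_mul, div_mul_cancel₀ _ hη2.ne'] at h1
      have h2 : η ^ 2 ≤ 1 := pow_le_one₀ hη.le (by linarith)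
      have h3 : (1:ℝ) * 1 ≤ (k + 1) * l := mul_le_mul (by linarith) hl1 zero_le_one (by linarith)
      linarith
    set d : ℝ := ν * p with hd
    have hd0 : 0 < d := by positivity
    have hdn : d ≤ n := (mul_le_of_le_one_right hν0.le hp1).trans hνn
    -- d is much larger than M
    have hdB : B ^ 2 ≤ η ^ 4 * d := by
      rw [← hBsq, hd, hε]
      have h1 : η ^ 6 ≤ η ^ 4 := pow_le_pow_of_le_one hη.le (by linarith) (by norm_num)
      have h2 : p ^ 4 ≤ p := pow_le_of_le_one hp.le hp1 (by norm_num)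
      calc (η ^ 3) ^ 2 * ν * p ^ 4 = η ^ 6 * (ν * p ^ 4) := by ring
        _ ≤ η ^ 4 * (ν * p) := mul_le_mul h1 (mul_le_mul_of_nonneg_left h2 hν0.le) (by positivity)
            (by positivity)
    have hx : (k + 4) * l ≤ η ^ 2 * d / (64 * M) := by
      rw [le_div_iff₀ (by positivity)]
      have h1 : (k + 4) * l * (64 * (M * η ^ 2)) ≤ η ^ 4 * d := by
        refine le_trans ?_ (hl8.trans hdB)
        calc (k + 4) * l * (64 * (M * η ^ 2)) ≤ (k + 4) * l * (64 * (5 * (k + 1) * l)) := by gcongr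
          _ = (320 * (k + 4) * (k + 1)) * l ^ 2 := by ring
          _ ≤ 10 ^ 4 * (k:ℝ) ^ 4 * l ^ 2 := by
            exact mul_le_mul_of_nonneg_right (alg4 k hk2).1 (by positivity)
      have h2 : η ^ 2 * ((k + 4) * l * (64 * M)) ≤ η ^ 2 * (η ^ 2 * d) := by linarith
      exact le_of_mul_le_mul_left h2 hη2
    have hx1 : 1 ≤ η ^ 2 * d / (64 * M) := by
      refine le_trans ?_ hx
      calc (1:ℝ) = 1 * 1 := by norm_num
        _ ≤ (k + 4) * l := mul_le_mul (by linarith) hl1 zero_le_one (by linarith)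
    have hdM : 64 * M ≤ η ^ 2 * d := by rwa [le_div_iff₀ (by positivity), one_mul] at hx1
    obtain ⟨hMd', hd6, hM6⟩ := alg3 η d M l k hη hη1 hd0 hM0' hl1 hk2 hdM hM1'
    have hMd : (M : ℝ) ≤ n := hMd'.trans hdn
    set R := ⌊(1 - η) * (1 - ε) * M * C / ν ^ 2⌋₊ with hR
    set r := ⌊(1 - η) * ((1 - 10 * ε) * d) / M⌋₊ with hr
    have h1η : 0 ≤ 1 - η := by linarith
    have h1ε : 0 ≤ 1 - ε := by linarith
    have h10ε : 0 ≤ 1 - 10 * ε := by linarith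
    have hR1 : (R : ℝ) ≤ (1 - η) * (1 - ε) * M * C / ν ^ 2 := Nat.floor_le (by positivity)
    have hr1 : (r : ℝ) ≤ (1 - η) * ((1 - 10 * ε) * d) / M := Nat.floor_le (by positivity)
    have hR2 : (1 - η) * (1 - ε) * M * C / ν ^ 2 - 1 ≤ R := (Nat.sub_one_lt_floor _).le
    have hr2 : (1 - η) * ((1 - 10 * ε) * d) / M - 1 ≤ r := (Nat.sub_one_lt_floor _).le
    refine ⟨M, R, r, hM0, ?_, ?_, ?_, hr1, ?_⟩
    · have h1 : m ≤ Real.exp (k * l) := by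
        rw [hm, ← hnpow]
        exact (mul_le_of_le_one_left hC0.le hp1).trans hC2
      have h2 : Real.exp (-(η ^ 2 * M / 4)) ≤ Real.exp (-((k + 1) * l)) :=
        Real.exp_le_exp.mpr (by linarith)
      calc m * Real.exp (-(η ^ 2 * M / 4)) ≤ Real.exp (k * l) * Real.exp (-((k + 1) * l)) :=
            mul_le_mul h1 h2 (Real.exp_pos _).le (Real.exp_pos _).le
        _ = Real.exp (-l) := by rw [← Real.exp_add]; congr 1; ring
        _ < 1 := by rw [Real.exp_lt_one_iff]; linarith
    · calc (R : ℝ) * (ν ^ 2 / C) ≤ (1 - η) * (1 - ε) * M * C / ν ^ 2 * (ν ^ 2 / C) := by gcongr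
        _ = _ := by field_simp
    · have h1 : (R : ℝ) * ν ≤ M * C := by
        have h2 : (1 - η) * (1 - ε) * M * C / ν ^ 2 ≤ M * C / ν ^ 2 := by
          refine div_le_div_of_nonneg_right ?_ (by positivity)
          have h3 : (1 - η) * (1 - ε) ≤ 1 := mul_le_one₀ (by linarith) h1ε (by linarith)
          have h4 : 0 ≤ M * C := by positivity
          calc (1 - η) * (1 - ε) * M * C = (1 - η) * (1 - ε) * (M * C) := by ring
            _ ≤ 1 * (M * C) := mul_le_mul_of_nonneg_right h3 h4
            _ = M * C := one_mul _
        have h5 := (le_div_iff₀ (by positivity)).mp (hR1.trans h2)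
        have h6 : (R : ℝ) * ν ≤ R * ν ^ 2 :=
          mul_le_mul_of_nonneg_left (le_self_pow₀ hν1 (by norm_num)) (by positivity)
        linarith
      have h2 : (R : ℝ) * ν ≤ Real.exp ((k + 1) * l) := by
        refine h1.trans ?_
        have : Real.exp ((k + 1) * l) = n * n ^ k := by
          rw [hnpow, hnexp, ← Real.exp_add]; congr 1; ring
        rw [this]
        exact mul_le_mul hMd hC2 hC0.le hn0.le
      have h3 : Real.exp (-(η ^ 2 * d / (64 * M))) ≤ Real.exp (-((k + 4) * l)) :=
        Real.exp_le_exp.mpr (by linarith)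
      calc R * (12 * (ν * Real.exp (-(η ^ 2 * d / (64 * M)))))
          = 12 * ((R * ν) * Real.exp (-(η ^ 2 * d / (64 * M)))) := by ring
        _ ≤ 12 * (Real.exp ((k + 1) * l) * Real.exp (-((k + 4) * l))) := by gcongr
        _ = 12 * Real.exp (-(3 * l)) := by rw [← Real.exp_add]; congr 2; ring
        _ < 1 := by
          have h4 : Real.exp (-(3 * l)) = (n ^ 3)⁻¹ := by
            rw [Real.exp_neg, hnpow]; norm_num
          rw [h4, ← div_eq_mul_inv, div_lt_one (by positivity)]
          have : n ≤ n ^ 3 := le_self_pow₀ (by linarith) (by norm_num)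
          linarith
    · have hRl : (1 - η) * (1 - ε - η / 3) * (M * C / ν ^ 2) ≤ R := by
        refine le_trans ?_ hR2
        have h1 : (M:ℝ) ≤ M * C / ν ^ 2 := by
          rw [le_div_iff₀ (by positivity)]
          exact mul_le_mul_of_nonneg_left hC1 hM0'.le
        have h2 : 6 ≤ (M * C / ν ^ 2) * η := hM6.trans (mul_le_mul_of_nonneg_right h1 hη.le)
        have h3 : 1 ≤ (1 - η) * ((M * C / ν ^ 2) * η / 3) := alg1 η _ hη hη1 h2
        have e1 : (1 - η) * (1 - ε) * M * C / ν ^ 2 = (1 - η) * (1 - ε) * (M * C / ν ^ 2) := by ring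
        rw [e1]
        linarith
      have hrl : (1 - η) * (1 - 10 * ε - η / 3) * (d / M) ≤ r := by
        refine le_trans ?_ hr2
        have h2 : 6 ≤ (d / M) * η := by
          rw [div_mul_eq_mul_div, le_div_iff₀ hM0']; linarith
        have h3 : 1 ≤ (1 - η) * ((d / M) * η / 3) := alg1 η _ hη hη1 h2
        have e1 : (1 - η) * ((1 - 10 * ε) * d) / M = (1 - η) * (1 - 10 * ε) * (d / M) := by ring
        rw [e1]
        linarith
      have hpr : (1 - 4 * η) ≤ (1 - η) * (1 - ε - η / 3) * ((1 - η) * (1 - 10 * ε - η / 3)) :=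
        alg2 η ε hη hη1 hε0 hεη
      have hQ : 0 ≤ C * p / ν := by positivity
      calc (1 - 4 * η) * m / ν = (1 - 4 * η) * (C * p / ν) := by rw [hm]; ring
        _ ≤ (1 - η) * (1 - ε - η / 3) * ((1 - η) * (1 - 10 * ε - η / 3)) * (C * p / ν) :=
            mul_le_mul_of_nonneg_right hpr hQ
        _ = ((1 - η) * (1 - ε - η / 3) * (M * C / ν ^ 2)) *
            ((1 - η) * (1 - 10 * ε - η / 3) * (d / M)) := by
            rw [hd]; field_simp
        _ ≤ R * r := by
            refine mul_le_mul hRl hrl ?_ (by positivity)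
            have : 0 ≤ 1 - 10 * ε - η / 3 := by linarith
            positivity

end PM

/-- Theorem 5 of the paper: let `k ≥ 2` divide `n` (we write `n = k j`),
`k_X = ⌊k/2⌋`, `k_Y = ⌈k/2⌉` (`= k - k_X`), and let `H` be a `k`-uniform hypergraph on
`[n]` with `m` edges and density `p = m/C(n,k)` satisfying `R_a, …, R_f` with `ε → 0`,
`ε n^{1/2} p²/log⁵ n → ∞`.  Then (for all large `n`) `H` contains at least
`(1 - 4ε^{1/3}) m/ν_k` pairwise edge-disjoint perfect matchings, `ν_k = n/k = j`. -/
theorem stmt_4 (k : ℕ) (hk : 2 ≤ k)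
    (H : ∀ j : ℕ, Finset (Finset (Fin (k * j))))
    (huniform : ∀ j, ∀ e ∈ H j, e.card = k)
    (p : ℕ → ℝ) (hp : ∀ j, p j = ((H j).card : ℝ) / (((k * j).choose k : ℕ) : ℝ))
    (ε : ℕ → ℝ) (hε0 : Tendsto ε atTop (nhds 0))
    (hεlim : Tendsto
      (fun j => ε j * Real.sqrt ((k * j : ℕ) : ℝ) * (p j) ^ 2
                  / (Real.log ((k * j : ℕ) : ℝ)) ^ 5) atTop atTop)
    (hRa : ∀ j, ∀ S : Finset (Fin (k * j)), S.card = k / 2 →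
      Nat.ceil ((1 - ε j) * (((k * j - k / 2).choose (k - k / 2) : ℕ) : ℝ) * p j)
        ≤ hDeg (k * j) k (H j) S)
    (hRb : ∀ j, ∀ S : Finset (Fin (k * j)), S.card = k - k / 2 →
      Nat.ceil ((1 - ε j) * (((k * j - (k - k / 2)).choose (k / 2) : ℕ) : ℝ) * p j)
        ≤ hDeg (k * j) k (H j) S)
    (hRc : ∀ j, ∀ S : Finset (Fin (k * j)), S.card = k / 2 + 1 →
      (hDeg (k * j) k (H j) S : ℝ)
        ≤ (1 + ε j) * (((k * j - (k / 2 + 1)).choose (k - k / 2 - 1) : ℕ) : ℝ) * p j)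
    (hRd : ∀ j, ∀ S : Finset (Fin (k * j)), S.card = (k - k / 2) + 1 →
      (hDeg (k * j) k (H j) S : ℝ)
        ≤ (1 + ε j) * (((k * j - (k - k / 2 + 1)).choose (k / 2 - 1) : ℕ) : ℝ) * p j)
    (hRe : ∀ j, ∀ S₁ S₂ : Finset (Fin (k * j)),
      S₁.card = k / 2 → S₂.card = k / 2 → Disjoint S₁ S₂ →
      (hNbhd (k * j) k (H j) S₁ ∩ hNbhd (k * j) k (H j) S₂).card
        ≤ Nat.floor ((1 + ε j) * (((k * j - 2 * (k / 2)).choose (k - k / 2) : ℕ) : ℝ) * (p j) ^ 2))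
    (hRf : ∀ j, ∀ S₁ S₂ : Finset (Fin (k * j)),
      S₁.card = k - k / 2 → S₂.card = k - k / 2 → Disjoint S₁ S₂ →
      (hNbhd (k * j) k (H j) S₁ ∩ hNbhd (k * j) k (H j) S₂).card
        ≤ Nat.floor ((1 + ε j) * (((k * j - 2 * (k - k / 2)).choose (k / 2) : ℕ) : ℝ) * (p j) ^ 2)) :
    ∀ᶠ j in atTop,
      ∃ 𝒮 : Finset (Finset (Finset (Fin (k * j)))),
        (1 - 4 * (ε j) ^ ((1 : ℝ) / 3)) * ((H j).card : ℝ) / (j : ℝ) ≤ (𝒮.card : ℝ) ∧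
        (∀ C ∈ 𝒮, IsHypPerfectMatching (k * j) k (H j) C) ∧
        (𝒮 : Set (Finset (Finset (Fin (k * j))))).Pairwise Disjoint := by
  have hk0 : 0 < k := by omega
  have hcast : Tendsto (fun j : ℕ => ((k * j : ℕ) : ℝ)) atTop atTop :=
    tendsto_natCast_atTop_atTop.comp (tendsto_id.const_mul_atTop' hk0)
  have hlog := Real.tendsto_log_atTop.comp hcast
  have hεsmall : ∀ᶠ j in atTop, ε j ≤ 1 / 1000 := by
    have := hε0.eventually (gt_mem_nhds (show (0:ℝ) < 1 / 1000 by norm_num))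
    filter_upwards [this] with j hj using le_of_lt hj
  filter_upwards [hεsmall, hεlim.eventually_ge_atTop 1,
    hlog.eventually_ge_atTop (10 ^ 4 * (k : ℝ) ^ 4), eventually_gt_atTop 0] with j h1 h2 h3 h4
  simp only [Function.comp_apply] at h3
  have hk4 : (0:ℝ) < 10 ^ 4 * (k : ℝ) ^ 4 := by positivity
  set l := Real.log ((k * j : ℕ) : ℝ) with hl
  have hl0 : 0 < l := lt_of_lt_of_le hk4 h3
  have hmain : l ^ 5 ≤ ε j * Real.sqrt ((k * j : ℕ) : ℝ) * (p j) ^ 2 := by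
    rwa [le_div_iff₀ (by positivity), one_mul] at h2
  have hpos : 0 < ε j * Real.sqrt ((k * j : ℕ) : ℝ) * (p j) ^ 2 :=
    lt_of_lt_of_le (by positivity) hmain
  have hC0 : 0 < (k * j).choose k := Nat.choose_pos (Nat.le_mul_of_pos_right k h4)
  have hC0' : (0:ℝ) < (((k * j).choose k : ℕ) : ℝ) := by exact_mod_cast hC0
  have hp0 : 0 ≤ p j := by rw [hp]; positivity
  have hppos : 0 < p j := by
    rcases hp0.eq_or_lt with h | h
    · rw [← h] at hpos; simp at hpos
    · exact h
  have hεpos : 0 < ε j := by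
    by_contra h
    have h5 : ε j * Real.sqrt ((k * j : ℕ) : ℝ) ≤ 0 :=
      mul_nonpos_of_nonpos_of_nonneg (not_lt.mp h) (Real.sqrt_nonneg _)
    have := mul_nonpos_of_nonpos_of_nonneg h5 (sq_nonneg (p j))
    linarith
  have hsub : H j ⊆ powersetCard k univ := fun e he => by
    rw [mem_powersetCard_univ]; exact huniform j e he
  have hHcard : (H j).card ≤ (k * j).choose k := by
    have := Finset.card_le_card hsub
    rwa [card_powersetCard, card_univ, Fintype.card_fin] at this
  have hp1 : p j ≤ 1 := by
    rw [hp, div_le_one hC0']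
    exact_mod_cast hHcard
  have hm : ((H j).card : ℝ) = p j * (((k * j).choose k : ℕ) : ℝ) := by
    rw [hp, div_mul_cancel₀ _ hC0'.ne']
  set η := (ε j) ^ ((1 : ℝ) / 3) with hη
  have hη0 : 0 < η := Real.rpow_pos_of_pos hεpos _
  have hη3 : ε j = η ^ 3 := by
    rw [hη, ← Real.rpow_natCast, ← Real.rpow_mul hεpos.le]; norm_num
  have hη1 : η ≤ 1 / 10 := by
    refine le_of_pow_le_pow_left₀ (n := 3) (by norm_num) (by norm_num) ?_
    rw [← hη3]; norm_num; linarith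
  have hsq : ((j : ℝ)) ^ 2 ≤ (((k * j).choose k : ℕ) : ℝ) := by
    have h5 : (univ.image (PM.gr (k := k) (ν := j))).card ≤ (powersetCard k (univ : Finset (Fin (k * j)))).card := by
      refine Finset.card_le_card fun e he => ?_
      obtain ⟨x, _, rfl⟩ := Finset.mem_image.mp he
      rw [mem_powersetCard_univ]; exact PM.gr_card hk x
    rw [Finset.card_image_of_injective _ (PM.gr_inj hk), card_powersetCard, card_univ, card_univ,
      Fintype.card_prod, Fintype.card_fin, Fintype.card_fin] at h5
    rw [sq]; exact_mod_cast h5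
  have hup : (((k * j).choose k : ℕ) : ℝ) ≤ ((k * j : ℕ) : ℝ) ^ k := by
    exact_mod_cast Nat.choose_le_pow (k * j) k
  obtain ⟨C1, C2, C3, M, R, r, hM, C4, C5, C6, C7, C8⟩ :=
    PM.numeric k j hk h4 _ _ (p j) (ε j) η l hη0 hη1 hη3 hppos hp1 hl h3 hmain hsq hup hm
  obtain ⟨𝒮, hS1, hS2, hS3⟩ := PM.finite_main (R := R) (M := M) (r := r) hk h4 (H j) (huniform j)
    (p j) (ε j) η hppos hp1 hεpos (by linarith) (hRa j) (hRb j) (hRe j) (hRf j) hη0.le (by linarith)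
    hM C1 C2 C3 C4 C5 C6 C7
  refine ⟨𝒮, ?_, hS2, hS3⟩
  rw [hS1]
  push_cast
  exact C8
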